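/- Let A be a basic indecomposable artin algebra and Γ a cycle-finite component of the cyclic quiver _cΓ_A. Then there exists a convex idempotent e_Γ of A such that the support algebra supp(Γ) is isomorphic to the algebra e_Γ A e_Γ. -/

import Mathlib

/-!
Common framework: finite length modules over a ring, the radical of the module
category, cycles of indecomposable modules, Auslander-Reiten quivers,
translation quivers notions, and classes of artin algebras.
Right `A`-modules are formalized as left `Aᵐᵒᵖ`-modules.
-/

universe u

/-- A bundled object of `mod R`: a finite length `R`-module. -/
structure ModA (R : Type u) [Ring R] : Type (u + 1) where
  M : Type u
  [acg : AddCommGroup M]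
  [mod : Module R M]
  finLen : IsFiniteLength R M

attribute [instance] ModA.acg ModA.mod

/-- A bundled (not necessarily finite length) `R`-module. -/
structure RawMod (R : Type u) [Ring R] : Type (u + 1) where
  M : Type u
  [acg : AddCommGroup M]
  [mod : Module R M]

attribute [instance] RawMod.acg RawMod.mod

/-- A module is indecomposable iff it is nonzero and its endomorphism ring has no
nontrivial idempotents. -/
def IsIndecMod (R : Type u) [Ring R] (M : Type u) [AddCommGroup M] [Module R M] : Prop :=
  Nontrivial M ∧ ∀ f : Module.End R M, f * f = f → f = 0 ∨ f = 1

namespace ModA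

variable {R : Type u} [Ring R]

/-- Indecomposability of an object of `mod R`. -/
def IsIndec (X : ModA R) : Prop := IsIndecMod R X.M

/-- Isomorphism of objects of `mod R`. -/
def Iso (X Y : ModA R) : Prop := Nonempty (X.M ≃ₗ[R] Y.M)

end ModA

/-- Membership in the radical `rad(X, Y)` of the category `mod R`: a map `f : X → Y`
belongs to the radical iff for every indecomposable `Z` and all `g : Z → X`, `h : Y → Z`
the composite `h ∘ f ∘ g` is not an isomorphism. -/
def InRad {R : Type u} [Ring R] {X Y : ModA R} (f : X.M →ₗ[R] Y.M) : Prop :=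
  ∀ Z : ModA R, Z.IsIndec → ∀ (g : Z.M →ₗ[R] X.M) (h : Y.M →ₗ[R] Z.M),
    ¬Function.Bijective (h.comp (f.comp g))

/-- The powers `rad^n` of the radical of `mod R`. -/
def radPow (R : Type u) [Ring R] : ℕ → ∀ X Y : ModA R, AddSubgroup (X.M →ₗ[R] Y.M)
  | 0, _, _ => ⊤
  | n + 1, X, Y => AddSubgroup.closure
      {f | ∃ (Z : ModA R) (g : X.M →ₗ[R] Z.M) (h : Z.M →ₗ[R] Y.M),
        InRad g ∧ h ∈ radPow R n Z Y ∧ f = h.comp g}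

/-- Membership in the infinite radical `rad^∞ = ⋂ₙ radⁿ` of `mod R`. -/
def InRadInf {R : Type u} [Ring R] {X Y : ModA R} (f : X.M →ₗ[R] Y.M) : Prop :=
  ∀ n : ℕ, f ∈ radPow R n X Y

/-- A cycle in `ind R`: a sequence of nonzero nonisomorphisms
`M₀ → M₁ → ⋯ → M_{r-1} → M_r = M₀` between indecomposable modules. -/
structure ModCycle (R : Type u) [Ring R] : Type (u + 1) where
  len : ℕ
  len_pos : 0 < len
  obj : Fin (len + 1) → ModA R
  obj_indec : ∀ i, (obj i).IsIndec
  closed : obj (Fin.last len) = obj 0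
  hom : ∀ i : Fin len, (obj i.castSucc).M →ₗ[R] (obj i.succ).M
  hom_ne_zero : ∀ i, hom i ≠ 0
  hom_not_iso : ∀ i, ¬Function.Bijective (hom i)

/-- A cycle is finite if none of its homomorphisms lies in the infinite radical. -/
def ModCycle.IsFiniteCycle {R : Type u} [Ring R] (c : ModCycle R) : Prop :=
  ∀ i, ¬InRadInf (c.hom i)

/-- The cycle passes through the module `M`. -/
def ModCycle.Passes {R : Type u} [Ring R] (c : ModCycle R) (M : ModA R) : Prop :=
  ∃ i, (c.obj i).Iso M

/-- A module is cycle-finite if it lies on a cycle and every cycle through it is finite. -/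
def IsCycleFiniteModule {R : Type u} [Ring R] (M : ModA R) : Prop :=
  (∃ c : ModCycle R, c.Passes M) ∧ ∀ c : ModCycle R, c.Passes M → c.IsFiniteCycle

/-- A module is directing if it lies on no cycle. -/
def IsDirectingModule {R : Type u} [Ring R] (M : ModA R) : Prop :=
  ¬∃ c : ModCycle R, c.Passes M

section Irreducible

variable {R : Type u} [Ring R]

/-- `f` is a split monomorphism (a section). -/
def SplitMonoMap {X Y : ModA R} (f : X.M →ₗ[R] Y.M) : Prop :=
  ∃ r : Y.M →ₗ[R] X.M, r.comp f = LinearMap.id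

/-- `f` is a split epimorphism (a retraction). -/
def SplitEpiMap {X Y : ModA R} (f : X.M →ₗ[R] Y.M) : Prop :=
  ∃ s : Y.M →ₗ[R] X.M, f.comp s = LinearMap.id

/-- `f` is an irreducible homomorphism. -/
def IsIrred {X Y : ModA R} (f : X.M →ₗ[R] Y.M) : Prop :=
  ¬SplitMonoMap f ∧ ¬SplitEpiMap f ∧
    ∀ (Z : ModA R) (g : X.M →ₗ[R] Z.M) (h : Z.M →ₗ[R] Y.M), h.comp g = f →
      SplitMonoMap g ∨ SplitEpiMap h

end Irreducible

/-- An almost split (Auslander-Reiten) sequence `0 → l → m → r → 0` in `mod R`. -/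
structure AlmostSplitSeq (R : Type u) [Ring R] : Type (u + 1) where
  l : ModA R
  m : ModA R
  r : ModA R
  f : l.M →ₗ[R] m.M
  g : m.M →ₗ[R] r.M
  inj : Function.Injective f
  surj : Function.Surjective g
  exact : LinearMap.range f = LinearMap.ker g
  not_split : ¬SplitEpiMap g
  l_indec : l.IsIndec
  r_indec : r.IsIndec
  right_almost : ∀ (Z : ModA R) (h : Z.M →ₗ[R] r.M), ¬SplitEpiMap h →
      ∃ h' : Z.M →ₗ[R] m.M, g.comp h' = h
  left_almost : ∀ (Z : ModA R) (h : l.M →ₗ[R] Z.M), ¬SplitMonoMap h →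
      ∃ h' : m.M →ₗ[R] Z.M, h'.comp f = h

/-- `N ≅ τ M` for the Auslander-Reiten translation `τ = DTr`. -/
def IsTauOf {R : Type u} [Ring R] (N M : ModA R) : Prop :=
  ∃ s : AlmostSplitSeq R, s.l.Iso N ∧ s.r.Iso M

/-- The indecomposable objects of `mod R`. -/
def IndecModA (R : Type u) [Ring R] := {X : ModA R // X.IsIndec}

/-- Isomorphism is an equivalence relation on indecomposable modules. -/
def isoSetoid (R : Type u) [Ring R] : Setoid (IndecModA R) where
  r X Y := X.1.Iso Y.1
  iseqv :=
    { refl := fun X => ⟨LinearEquiv.refl R X.1.M⟩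
      symm := fun h => h.elim fun e => ⟨e.symm⟩
      trans := fun h h' => h.elim fun e => h'.elim fun e' => ⟨e.trans e'⟩ }

/-- The vertices of the Auslander-Reiten quiver `Γ_R`: isomorphism classes of
indecomposable modules in `mod R`. -/
def ARVertex (R : Type u) [Ring R] := Quotient (isoSetoid R)

/-- The vertex of `Γ_R` given by an indecomposable module. -/
def ARVertex.mk {R : Type u} [Ring R] (X : IndecModA R) : ARVertex R :=
  Quotient.mk (isoSetoid R) X

section ARQuiver

variable {R : Type u} [Ring R]

/-- The arrows of the Auslander-Reiten quiver: `x → y` iff there is an irreducible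
homomorphism between representatives. -/
def ARArrow (x y : ARVertex R) : Prop :=
  ∃ (X Y : IndecModA R) (f : X.1.M →ₗ[R] Y.1.M),
    IsIrred f ∧ ARVertex.mk X = x ∧ ARVertex.mk Y = y

/-- `TauRel x y` iff `x = τ y` in the Auslander-Reiten quiver. -/
def TauRel (x y : ARVertex R) : Prop :=
  ∃ X Y : IndecModA R, ARVertex.mk X = x ∧ ARVertex.mk Y = y ∧ IsTauOf X.1 Y.1

/-- A vertex given by an (indecomposable) projective module. -/
def IsProjVertex (x : ARVertex R) : Prop :=
  ∃ X : IndecModA R, ARVertex.mk X = x ∧ Module.Projective R X.1.M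

/-- A vertex given by an (indecomposable) injective module. -/
def IsInjVertex (x : ARVertex R) : Prop :=
  ∃ X : IndecModA R, ARVertex.mk X = x ∧ Module.Injective R X.1.M

/-- The vertex lies on an oriented cycle of `Γ_R`. -/
def OnARCycle (x : ARVertex R) : Prop := Relation.TransGen ARArrow x x

/-- An edge (arrow in either direction) of the underlying graph of `Γ_R`. -/
def ARStep (x y : ARVertex R) : Prop := ARArrow x y ∨ ARArrow y x

/-- `D` is a connected component of the full subquiver of `Γ_R` on the vertex set `S`. -/
def IsComponentOf (S D : Set (ARVertex R)) : Prop :=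
  D ⊆ S ∧ D.Nonempty ∧
    (∀ x ∈ D, ∀ y ∈ S, ARStep x y → y ∈ D) ∧
    ∀ x ∈ D, ∀ y ∈ D, Relation.ReflTransGen (fun a b => a ∈ S ∧ b ∈ S ∧ ARStep a b) x y

/-- `C` is a connected component of `Γ_R`. -/
def IsARComponent (C : Set (ARVertex R)) : Prop := IsComponentOf Set.univ C

/-- The vertex lies on an oriented cycle all of whose vertices belong to `S`. -/
def OnCycleIn (S : Set (ARVertex R)) (x : ARVertex R) : Prop :=
  Relation.TransGen (fun a b => a ∈ S ∧ b ∈ S ∧ ARArrow a b) x x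

/-- `Γ` is a connected component of the cyclic quiver `_cΓ_R` (a cyclic component). -/
def IsCyclicComponent (Γ : Set (ARVertex R)) : Prop :=
  IsComponentOf {x | OnARCycle x} Γ

/-- A vertex represented by a cycle-finite module. -/
def IsCycleFiniteVertex (x : ARVertex R) : Prop :=
  ∃ X : IndecModA R, ARVertex.mk X = x ∧ IsCycleFiniteModule X.1

/-- A vertex represented by a directing module. -/
def IsDirectingVertex (x : ARVertex R) : Prop :=
  ∃ X : IndecModA R, ARVertex.mk X = x ∧ IsDirectingModule X.1

/-- A cycle-finite cyclic component: a cyclic component containing a cycle-finite module. -/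
def IsCycleFiniteCyclicComponent (Γ : Set (ARVertex R)) : Prop :=
  IsCyclicComponent Γ ∧ ∃ x ∈ Γ, IsCycleFiniteVertex x

/-- A full translation subquiver is cyclic if each of its vertices lies on an oriented
cycle inside it. -/
def IsCyclicSub (S : Set (ARVertex R)) : Prop := ∀ x ∈ S, OnCycleIn S x

/-- A full translation subquiver is coherent: every projective vertex is the start of an
infinite sectional path inside it, and every injective vertex is the end of an infinite
sectional path inside it. -/
def IsCoherentSub (S : Set (ARVertex R)) : Prop :=
  (∀ x ∈ S, IsProjVertex x → ∃ c : ℕ → ARVertex R, c 0 = x ∧ (∀ n, c n ∈ S) ∧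
      (∀ n, ARArrow (c n) (c (n + 1))) ∧ ∀ n, ¬TauRel (c n) (c (n + 2))) ∧
  (∀ x ∈ S, IsInjVertex x → ∃ c : ℕ → ARVertex R, c 0 = x ∧ (∀ n, c n ∈ S) ∧
      (∀ n, ARArrow (c (n + 1)) (c n)) ∧ ∀ n, ¬TauRel (c (n + 2)) (c n))

/-- `S` is a convex subquiver of (the full subquiver on) `C`: every path in `C` with
source and target in `S` has all its vertices in `S`. -/
def ConvexIn (C S : Set (ARVertex R)) : Prop :=
  ∀ (n : ℕ) (c : ℕ → ARVertex R), (∀ k ≤ n, c k ∈ C) →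
    (∀ k < n, ARArrow (c k) (c (k + 1))) → c 0 ∈ S → c n ∈ S → ∀ k ≤ n, c k ∈ S

/-- `S` is the core of the almost acyclic component `C`: the finite convex subquiver of
`C` containing all vertices lying on oriented cycles in `C`. -/
def IsCoreOf (C S : Set (ARVertex R)) : Prop :=
  S ⊆ C ∧ S.Finite ∧ ConvexIn C S ∧ ∀ x ∈ C, OnCycleIn C x → x ∈ S

/-- A component is almost acyclic if all but finitely many of its vertices do not lie on
oriented cycles. -/
def IsAlmostAcyclicComp (C : Set (ARVertex R)) : Prop := {x ∈ C | OnCycleIn C x}.Finite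

/-- A component is almost cyclic if its cyclic part is cofinite. -/
def IsAlmostCyclicComp (C : Set (ARVertex R)) : Prop := {x ∈ C | ¬OnCycleIn C x}.Finite

/-- Two vertices lie in the same `τ`-orbit. -/
def TauConn (x y : ARVertex R) : Prop :=
  Relation.ReflTransGen (fun a b => TauRel a b ∨ TauRel b a) x y

/-- The left stable part of `C`: remove the `τ`-orbits of projective vertices. -/
def leftStable (C : Set (ARVertex R)) : Set (ARVertex R) :=
  {x | x ∈ C ∧ ¬∃ y, TauConn x y ∧ IsProjVertex y}

/-- The right stable part of `C`: remove the `τ`-orbits of injective vertices. -/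
def rightStable (C : Set (ARVertex R)) : Set (ARVertex R) :=
  {x | x ∈ C ∧ ¬∃ y, TauConn x y ∧ IsInjVertex y}

/-- The stable part of `C`. -/
def stablePart (C : Set (ARVertex R)) : Set (ARVertex R) := leftStable C ∩ rightStable C

end ARQuiver

/-- The arrows of the translation quiver `ℤA∞/(τ^r)`, with vertices indexed by the
`τ`-orbit coordinate in `ZMod r` and the quasi-length (minus one) in `ℕ`. -/
def TubeArrow {r : ℕ} : ZMod r × ℕ → ZMod r × ℕ → Prop := fun u v =>
  (v.1 = u.1 ∧ v.2 = u.2 + 1) ∨ (v.1 = u.1 + 1 ∧ u.2 = v.2 + 1)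

section Tube

variable {R : Type u} [Ring R]

/-- `T` is a stable tube of rank `r`, parametrized by `φ : ℤA∞/(τ^r) → Γ_R`. -/
def IsStableTubeVia (T : Set (ARVertex R)) (r : ℕ) (φ : ZMod r × ℕ → ARVertex R) : Prop :=
  0 < r ∧ Function.Injective φ ∧ Set.range φ = T ∧
    (∀ u v, TubeArrow u v → ARArrow (φ u) (φ v)) ∧
    (∀ u v, ARArrow (φ u) (φ v) → TubeArrow u v) ∧
    ∀ (i : ZMod r) (n : ℕ), TauRel (φ (i - 1, n)) (φ (i, n))

/-- `T` is a stable tube. -/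
def IsStableTube (T : Set (ARVertex R)) : Prop := ∃ r φ, IsStableTubeVia T r φ

end Tube

section Separating

variable {R : Type u} [Ring R]

/-- A family of vertices is generalized standard if `rad^∞` vanishes between its modules. -/
def GeneralizedStandardSet (U : Set (ARVertex R)) : Prop :=
  ∀ X Y : IndecModA R, ARVertex.mk X ∈ U → ARVertex.mk Y ∈ U →
    ∀ f : X.1.M →ₗ[R] Y.1.M, InRadInf f → f = 0

/-- `S` is (isomorphic to) a composition factor (a subquotient) of `M`. -/
def IsCompFactorMod (R : Type u) [Ring R] (S : Type u) [AddCommGroup S] [Module R S]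
    (M : Type u) [AddCommGroup M] [Module R M] : Prop :=
  ∃ N' N : Submodule R M, N' ≤ N ∧
    Nonempty ((↥N ⧸ N'.comap N.subtype) ≃ₗ[R] S)

/-- A family of vertices is sincere if every simple module is a composition factor of one
of its modules. -/
def SincereSet (U : Set (ARVertex R)) : Prop :=
  ∀ (S : Type u) [AddCommGroup S] [Module R S], IsSimpleModule R S →
    ∃ x ∈ U, ∃ X : IndecModA R, ARVertex.mk X = x ∧ IsCompFactorMod R S X.1.M

/-- All homomorphisms from modules with vertex in `U` to modules with vertex in `V` vanish. -/
def HomVanish (U V : Set (ARVertex R)) : Prop :=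
  ∀ X Y : IndecModA R, ARVertex.mk X ∈ U → ARVertex.mk Y ∈ V →
    ∀ f : X.1.M →ₗ[R] Y.1.M, f = 0

/-- Every homomorphism from a module in `U` to a module in `V` factors through the
additive closure of the modules in `W`. -/
def FactorsThrough (U W V : Set (ARVertex R)) : Prop :=
  ∀ X Y : IndecModA R, ARVertex.mk X ∈ U → ARVertex.mk Y ∈ V →
    ∀ f : X.1.M →ₗ[R] Y.1.M, ∃ (k : ℕ) (Z : Fin k → IndecModA R)
      (g : ∀ i, X.1.M →ₗ[R] (Z i).1.M) (h : ∀ i, (Z i).1.M →ₗ[R] Y.1.M),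
      (∀ i, ARVertex.mk (Z i) ∈ W) ∧ f = ∑ i, (h i).comp (g i)

/-- `cs` is a separating family of components of `Γ_R`. -/
def IsSeparatingFamily (cs : Set (Set (ARVertex R))) : Prop :=
  ∃ ps qs : Set (Set (ARVertex R)),
    (∀ C ∈ ps, IsARComponent C) ∧ (∀ C ∈ cs, IsARComponent C) ∧ (∀ C ∈ qs, IsARComponent C) ∧
    (∀ C, IsARComponent C → C ∈ ps ∨ C ∈ cs ∨ C ∈ qs) ∧
    (∀ C ∈ ps, C ∉ cs ∧ C ∉ qs) ∧ (∀ C ∈ cs, C ∉ qs) ∧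
    SincereSet (⋃₀ cs) ∧ GeneralizedStandardSet (⋃₀ cs) ∧
    HomVanish (⋃₀ qs) (⋃₀ ps) ∧ HomVanish (⋃₀ qs) (⋃₀ cs) ∧ HomVanish (⋃₀ cs) (⋃₀ ps) ∧
    FactorsThrough (⋃₀ ps) (⋃₀ cs) (⋃₀ qs)

end Separating

/-! ### Classes of algebras via their Auslander-Reiten quivers.
For a ring `B`, the category `mod B` of finitely generated right `B`-modules is
realized as the category of finite length left `Bᵐᵒᵖ`-modules. -/

/-- An algebra is of finite representation type if it has only finitely many isomorphism
classes of indecomposable finitely generated (right) modules. -/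
def IsFiniteRepTypeAlg (B : Type u) [Ring B] : Prop :=
  (Set.univ : Set (ARVertex Bᵐᵒᵖ)).Finite

/-- An algebra is cycle-finite if all cycles in `ind B` are finite. -/
def IsCycleFiniteAlg (B : Type u) [Ring B] : Prop :=
  ∀ c : ModCycle Bᵐᵒᵖ, c.IsFiniteCycle

/-- A generalized multicoil algebra: an algebra whose Auslander-Reiten quiver admits a
separating family of almost cyclic coherent components. -/
def IsGeneralizedMulticoilAlgebra (B : Type u) [Ring B] : Prop :=
  ∃ cs : Set (Set (ARVertex Bᵐᵒᵖ)),
    (∀ C ∈ cs, IsARComponent C ∧ IsAlmostCyclicComp C ∧ IsCoherentSub C) ∧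
    IsSeparatingFamily cs

/-- A generalized double tilted algebra: an algebra whose Auslander-Reiten quiver admits
a separating almost acyclic component (a connecting component). -/
def IsGeneralizedDoubleTiltedAlgebra (B : Type u) [Ring B] : Prop :=
  ∃ C : Set (ARVertex Bᵐᵒᵖ),
    IsARComponent C ∧ IsAlmostAcyclicComp C ∧ IsSeparatingFamily {C}

/-- A concealed canonical algebra: an algebra whose Auslander-Reiten quiver admits a
separating family of stable tubes. -/
def IsConcealedCanonicalAlgebra (B : Type u) [Ring B] : Prop :=
  ∃ ts : Set (Set (ARVertex Bᵐᵒᵖ)), (∀ T ∈ ts, IsStableTube T) ∧ IsSeparatingFamily ts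

/-- A generic module: an indecomposable module of infinite length with finite endolength. -/
def IsGenericModule (R : Type u) [Ring R] (N : RawMod R) : Prop :=
  IsIndecMod R N.M ∧ ¬IsFiniteLength R N.M ∧ IsFiniteLength (Module.End R N.M) N.M

/-- The endolength of a module: its length over its endomorphism ring. -/
noncomputable def endolength (R : Type u) [Ring R] (N : RawMod R) : WithBot ℕ∞ :=
  Order.krullDim (Submodule (Module.End R N.M) N.M)

/-- Generic tameness in the sense of Crawley-Boevey: for each `d` there are only finitely
many isomorphism classes of generic (right) modules of endolength `d`. -/
def IsGenericallyTameAlg (B : Type u) [Ring B] : Prop :=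
  ∀ d : ℕ, ∃ (k : ℕ) (T : Fin k → RawMod Bᵐᵒᵖ),
    ∀ N : RawMod Bᵐᵒᵖ, IsGenericModule Bᵐᵒᵖ N → endolength Bᵐᵒᵖ N = (d : ℕ∞) →
      ∃ i, Nonempty (N.M ≃ₗ[Bᵐᵒᵖ] (T i).M)

/-- A tame generalized multicoil algebra. -/
def IsTameGeneralizedMulticoilAlgebra (B : Type u) [Ring B] : Prop :=
  IsGeneralizedMulticoilAlgebra B ∧ IsGenericallyTameAlg B

/-- A tame generalized double tilted algebra. -/
def IsTameGeneralizedDoubleTiltedAlgebra (B : Type u) [Ring B] : Prop :=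
  IsGeneralizedDoubleTiltedAlgebra B ∧ IsGenericallyTameAlg B

/-! ### The quiver of an algebra, convex idempotents, basic and connected algebras -/

section AlgebraSide

variable (A : Type u) [Ring A]

/-- The Jacobson radical of `A` (as a left ideal; it is in fact two-sided). -/
def jacobsonRad : Ideal A := (⊥ : Ideal A).jacobson

/-- The square of the Jacobson radical of `A`. -/
def jacobsonRadSq : Ideal A :=
  Ideal.span {x | ∃ a ∈ jacobsonRad A, ∃ b ∈ jacobsonRad A, x = a * b}

/-- A primitive idempotent of `A`. -/
def IsPrimitiveIdempotent (e : A) : Prop :=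
  IsIdempotentElem e ∧ e ≠ 0 ∧
    ∀ f g : A, IsIdempotentElem f → IsIdempotentElem g → f * g = 0 → g * f = 0 →
      e = f + g → f = 0 ∨ g = 0

/-- A complete family of pairwise orthogonal primitive idempotents of `A`; its indices
are the vertices of the quiver `Q_A` of `A`. -/
structure CompleteIdemFamily (A : Type u) [Ring A] where
  n : ℕ
  e : Fin n → A
  prim : ∀ i, IsPrimitiveIdempotent A (e i)
  orth : ∀ i j, i ≠ j → e i * e j = 0
  total : ∑ i, e i = 1

/-- There is an arrow `i → j` in the quiver `Q_A` iff `e_i (rad A) e_j ⊄ (rad A)²`. -/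
def QAarrow (E : CompleteIdemFamily A) (i j : Fin E.n) : Prop :=
  ∃ y ∈ jacobsonRad A, E.e i * y * E.e j ∉ jacobsonRadSq A

/-- A set of vertices of `Q_A` is convex if every path of `Q_A` with source and target in
it has all its vertices in it. -/
def ConvexVertexSet (E : CompleteIdemFamily A) (S : Set (Fin E.n)) : Prop :=
  ∀ (n : ℕ) (c : ℕ → Fin E.n), (∀ k < n, QAarrow A E (c k) (c (k + 1))) →
    c 0 ∈ S → c n ∈ S → ∀ k ≤ n, c k ∈ S

/-- A convex idempotent of `A`: a sum of pairwise orthogonal primitive idempotents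
corresponding to the vertices of a convex subquiver of `Q_A`. -/
def IsConvexIdempotent (e : A) : Prop :=
  ∃ (E : CompleteIdemFamily A) (S : Finset (Fin E.n)),
    ConvexVertexSet A E ↑S ∧ e = ∑ i ∈ S, E.e i

/-- The corner `eAe` of `A` at an idempotent `e`, as a nonunital subring (it is a unital
ring with unit `e`). -/
def cornerRing (e : A) : NonUnitalSubring A where
  carrier := {x | e * x = x ∧ x * e = x}
  zero_mem' := by simp
  add_mem' := by
    rintro a b ⟨ha1, ha2⟩ ⟨hb1, hb2⟩
    constructor
    · rw [mul_add, ha1, hb1]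
    · rw [add_mul, ha2, hb2]
  neg_mem' := by
    rintro a ⟨ha1, ha2⟩
    constructor
    · rw [mul_neg, ha1]
    · rw [neg_mul, ha2]
  mul_mem' := by
    rintro a b ⟨ha1, ha2⟩ ⟨hb1, hb2⟩
    constructor
    · rw [← mul_assoc, ha1]
    · rw [mul_assoc, hb2]

/-- An (indecomposable =) connected algebra: no nontrivial central idempotents. -/
def IsConnectedAlgebra : Prop :=
  Nontrivial A ∧ ∀ e : A, IsIdempotentElem e → e ∈ Set.center A → e = 0 ∨ e = 1

/-- A basic algebra: distinct orthogonal primitive idempotents have nonisomorphic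
associated indecomposable projective right modules. -/
def IsBasicAlgebra : Prop :=
  ¬∃ e f : A, IsPrimitiveIdempotent A e ∧ IsPrimitiveIdempotent A f ∧
    e * f = 0 ∧ f * e = 0 ∧
    Nonempty ((Submodule.span Aᵐᵒᵖ {e} : Submodule Aᵐᵒᵖ A) ≃ₗ[Aᵐᵒᵖ]
      (Submodule.span Aᵐᵒᵖ {f} : Submodule Aᵐᵒᵖ A))

end AlgebraSide

/-! ### Support algebras and faithful algebras of families of vertices -/

section Support

variable (A : Type u) [Ring A]

/-- The radical of a module: the intersection of its maximal submodules. -/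
def modRadical (R : Type u) [Ring R] (M : Type u) [AddCommGroup M] [Module R M] :
    Submodule R M :=
  sInf {N | IsCoatom N}

/-- The intersection `ann_A(Γ)` of the annihilators of all right `A`-modules whose
vertices belong to `Γ`, as a two-sided ideal of `A`. -/
def annTwoSidedIdeal (Γ : Set (ARVertex Aᵐᵒᵖ)) : TwoSidedIdeal A :=
  TwoSidedIdeal.mk'
    {a | ∀ x ∈ Γ, ∀ X : IndecModA Aᵐᵒᵖ, ARVertex.mk X = x →
      ∀ m : X.1.M, MulOpposite.op a • m = 0}
    (by intro x _ X _ m; simp)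
    (by
      intro a b ha hb x hx X hX m
      have : MulOpposite.op (a + b) • m = MulOpposite.op a • m + MulOpposite.op b • m := by
        rw [← add_smul]; rfl
      rw [this, ha x hx X hX m, hb x hx X hX m, add_zero])
    (by
      intro a ha x hx X hX m
      have : MulOpposite.op (-a) • m = -(MulOpposite.op a • m) := by
        rw [← neg_smul]; rfl
      rw [this, ha x hx X hX m, neg_zero])
    (by
      intro a b hb x hx X hX m
      have : MulOpposite.op (a * b) • m = MulOpposite.op b • (MulOpposite.op a • m) := by
        rw [← mul_smul]; rfl
      rw [this, hb x hx X hX _])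
    (by
      intro a b ha x hx X hX m
      have : MulOpposite.op (a * b) • m = MulOpposite.op b • (MulOpposite.op a • m) := by
        rw [← mul_smul]; rfl
      rw [this, ha x hx X hX m, smul_zero])

/-- The faithful algebra `B(Γ) = A / ann_A(Γ)` of a family `Γ` of vertices of `Γ_A`. -/
abbrev faithfulAlg (Γ : Set (ARVertex Aᵐᵒᵖ)) : Type u :=
  (annTwoSidedIdeal A Γ).ringCon.Quotient

/-- The canonical projection `A → B(Γ)`. -/
def faithfulProj (Γ : Set (ARVertex Aᵐᵒᵖ)) : A →+* faithfulAlg A Γ :=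
  RingCon.mk' (annTwoSidedIdeal A Γ).ringCon

/-- The trace ideal `t_A(Γ)`: the two-sided ideal of `A` generated by the images of all
homomorphisms of right `A`-modules from `Q` to `A`. -/
def traceIdeal (Q : Submodule Aᵐᵒᵖ A) : TwoSidedIdeal A :=
  TwoSidedIdeal.span (⋃ f : ↥Q →ₗ[Aᵐᵒᵖ] A, Set.range f)

/-- A decomposition `A = P_Γ ⊕ Q_Γ` of `A` in `mod A` such that the simple summands of
`P_Γ / rad P_Γ` are exactly the simple composition factors of the modules in `Γ`. -/
structure GammaDecomp (A : Type u) [Ring A] (Γ : Set (ARVertex Aᵐᵒᵖ)) where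
  P : Submodule Aᵐᵒᵖ A
  Q : Submodule Aᵐᵒᵖ A
  compl : IsCompl P Q
  top_factors : ∀ (S : Type u) [AddCommGroup S] [Module Aᵐᵒᵖ S], IsSimpleModule Aᵐᵒᵖ S →
    (IsCompFactorMod Aᵐᵒᵖ S (↥P ⧸ modRadical Aᵐᵒᵖ ↥P) ↔
      ∃ x ∈ Γ, ∃ X : IndecModA Aᵐᵒᵖ, ARVertex.mk X = x ∧ IsCompFactorMod Aᵐᵒᵖ S X.1.M)

end Support

/-- Restriction of scalars along a surjective ring homomorphism `π : A → B` identifies a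
vertex `y` of `Γ_B` with a vertex `x` of `Γ_A`: representatives have the same underlying
group, with the `A`-action obtained from the `B`-action through `π`. -/
def VertexRestrictsTo {A B : Type u} [Ring A] [Ring B] (π : A →+* B)
    (y : ARVertex Bᵐᵒᵖ) (x : ARVertex Aᵐᵒᵖ) : Prop :=
  ∃ (N : IndecModA Bᵐᵒᵖ) (X : IndecModA Aᵐᵒᵖ), ARVertex.mk N = y ∧ ARVertex.mk X = x ∧
    ∃ e : X.1.M ≃+ N.1.M, ∀ (a : A) (m : X.1.M),
      e (MulOpposite.op a • m) = MulOpposite.op (π a) • e m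

/-! ### `K`-module structures on Hom-groups, lengths, and Ext -/

section KLength

variable (K B : Type u) [CommRing K] [Ring B] [Algebra K B]
variable (X N : Type u) [AddCommGroup X] [Module B X] [AddCommGroup N] [Module B N]

/-- The action of `K` on `B`-linear maps, through `algebraMap K B`. -/
def homKSMul (k : K) (f : X →ₗ[B] N) : X →ₗ[B] N where
  toFun x := algebraMap K B k • f x
  map_add' x y := by show algebraMap K B k • f (x + y) = _; rw [map_add, smul_add]
  map_smul' b x := by
    simp only [map_smul, RingHom.id_apply, smul_smul]
    rw [Algebra.commutes]

/-- The `K`-module structure on the group of `B`-linear maps. -/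
def homKModule : Module K (X →ₗ[B] N) where
  smul := homKSMul K B X N
  one_smul f := LinearMap.ext fun x => by
    show algebraMap K B 1 • f x = f x
    rw [map_one, one_smul]
  mul_smul k l f := LinearMap.ext fun x => by
    show algebraMap K B (k * l) • f x = algebraMap K B k • algebraMap K B l • f x
    rw [map_mul, mul_smul]
  smul_zero k := LinearMap.ext fun x => by
    show algebraMap K B k • (0 : X →ₗ[B] N) x = 0
    simp
  smul_add k f g := LinearMap.ext fun x => by
    show algebraMap K B k • (f + g) x = algebraMap K B k • f x + algebraMap K B k • g x
    simp [smul_add]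
  add_smul k l f := LinearMap.ext fun x => by
    show algebraMap K B (k + l) • f x = algebraMap K B k • f x + algebraMap K B l • f x
    rw [map_add, add_smul]
  zero_smul f := LinearMap.ext fun x => by
    show algebraMap K B 0 • f x = 0
    rw [map_zero, zero_smul]

/-- The length `|Hom_B(X, N)|` of the group of `B`-linear maps `X → N` as a `K`-module. -/
noncomputable def homKLength : WithBot ℕ∞ :=
  letI : Module K (X →ₗ[B] N) := homKModule K B X N
  Order.krullDim (Submodule K (X →ₗ[B] N))

/-- The canonical surjection from the free module on (the underlying set of) `X` to `X`. -/
noncomputable def freeCover : (X →₀ B) →ₗ[B] X :=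
  Finsupp.linearCombination B id

/-- The length `|Ext¹_B(X, N)|` of `Ext¹` as a `K`-module, computed as the cokernel of
`Hom_B(F, N) → Hom_B(Ω X, N)` for the canonical free cover `F → X` with kernel `Ω X`. -/
noncomputable def ext1KLength : WithBot ℕ∞ :=
  letI : Module K (↥(LinearMap.ker (freeCover B X)) →ₗ[B] N) :=
    homKModule K B (↥(LinearMap.ker (freeCover B X))) N
  let D : Submodule K (↥(LinearMap.ker (freeCover B X)) →ₗ[B] N) :=
    { carrier := {f | ∃ g : (X →₀ B) →ₗ[B] N,
        f = g.comp (LinearMap.ker (freeCover B X)).subtype}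
      add_mem' := by
        rintro f₁ f₂ ⟨g₁, rfl⟩ ⟨g₂, rfl⟩
        exact ⟨g₁ + g₂, rfl⟩
      zero_mem' := ⟨0, rfl⟩
      smul_mem' := by
        rintro k f ⟨g, rfl⟩
        exact ⟨homKSMul K B _ N k g, rfl⟩ }
  Order.krullDim (Submodule K ((↥(LinearMap.ker (freeCover B X)) →ₗ[B] N) ⧸ D))

end KLength

/-- Vanishing of `Ext¹_B(X, N)`: every short exact sequence `0 → N → E → X → 0` splits. -/
def Ext1IsZero (B : Type u) [Ring B] (X : Type u) [AddCommGroup X] [Module B X]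
    (N : Type u) [AddCommGroup N] [Module B N] : Prop :=
  ∀ (E : Type u) [AddCommGroup E] [Module B E], ∀ (f : N →ₗ[B] E) (g : E →ₗ[B] X),
    Function.Injective f → Function.Surjective g → LinearMap.range f = LinearMap.ker g →
    ∃ s : X →ₗ[B] E, g.comp s = LinearMap.id

/-- The syzygy `Ω X`: the kernel of the canonical free cover of `X`. -/
noncomputable def syzygyRaw (B : Type u) [Ring B] (X : RawMod B) : RawMod B :=
  ⟨↥(LinearMap.ker (freeCover B X.M))⟩

/-- Iterated syzygies. -/
noncomputable def syzygyIter (B : Type u) [Ring B] : ℕ → RawMod B → RawMod B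
  | 0, X => X
  | n + 1, X => syzygyRaw B (syzygyIter B n X)

/-- Vanishing of `Ext^r_B(X, N)` for `r ≥ 1`, via `Ext^r(X, N) ≅ Ext¹(Ω^{r-1} X, N)`. -/
noncomputable def ExtIsZero (B : Type u) [Ring B] (X N : RawMod B) (r : ℕ) : Prop :=
  Ext1IsZero B (syzygyIter B (r - 1) X).M N.M

/-- `[X] = [M]` in the Grothendieck group `K₀`: the modules `X` and `M` have the same
composition factors including multiplicities. -/
def SameCompFactors {B : Type u} [Ring B] (X M : ModA B) : Prop :=
  ∃ (n : ℕ) (s : Fin (n + 1) → Submodule B X.M) (t : Fin (n + 1) → Submodule B M.M)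
    (σ : Equiv.Perm (Fin n)),
    s 0 = ⊥ ∧ s (Fin.last n) = ⊤ ∧ t 0 = ⊥ ∧ t (Fin.last n) = ⊤ ∧
    (∀ i : Fin n, s i.castSucc ≤ s i.succ) ∧ (∀ i : Fin n, t i.castSucc ≤ t i.succ) ∧
    ∀ i : Fin n,
      IsSimpleModule B (↥(s i.succ) ⧸ (s i.castSucc).comap (s i.succ).subtype) ∧
      Nonempty ((↥(s i.succ) ⧸ (s i.castSucc).comap (s i.succ).subtype) ≃ₗ[B]
        (↥(t (σ i).succ) ⧸ (t (σ i).castSucc).comap (t (σ i).succ).subtype))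

/-- A torsion class in `mod B`: a class of modules closed under factor modules and
extensions. -/
def IsTorsionClass (B : Type u) [Ring B] (T : Set (ModA B)) : Prop :=
  (∀ M ∈ T, ∀ (N : ModA B) (g : M.M →ₗ[B] N.M), Function.Surjective g → N ∈ T) ∧
  ∀ (X E M : ModA B) (f : X.M →ₗ[B] E.M) (g : E.M →ₗ[B] M.M),
    Function.Injective f → Function.Surjective g → LinearMap.range f = LinearMap.ker g →
    X ∈ T → M ∈ T → E ∈ T

/-- A torsion class is functorially finite iff it is of the form `Fac(M)`. -/
def IsFunctoriallyFinite (B : Type u) [Ring B] (T : Set (ModA B)) : Prop :=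
  ∃ M : ModA B,
    T = {N | ∃ (k : ℕ) (g : (Fin k → M.M) →ₗ[B] N.M), Function.Surjective g}

/-- A module `M` is `τ`-rigid if `Hom(M, τM) = 0`. -/
def IsTauRigid {B : Type u} [Ring B] (M : ModA B) : Prop :=
  ∀ N : ModA B, IsTauOf N M → ∀ f : M.M →ₗ[B] N.M, f = 0

/-- A module `M` is rigid if `Ext¹(M, M) = 0`. -/
def IsRigid {B : Type u} [Ring B] (M : ModA B) : Prop := Ext1IsZero B M.M M.M

/-- `α(M) ≤ 2`: the middle term of any almost split sequence ending at `M` has at most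
two indecomposable direct summands. -/
def AlphaLe2 {B : Type u} [Ring B] (M : ModA B) : Prop :=
  ∀ s : AlmostSplitSeq B, s.r.Iso M →
    ∀ (k : ℕ) (N : Fin k → Submodule B s.m.M),
      (∀ i, IsIndecMod B ↥(N i)) → iSupIndep N → (⨆ i, N i) = ⊤ → k ≤ 2

/-!
A map between indecomposable modules that is neither an isomorphism nor irreducible is a sum of
composites of two nonisomorphisms, so a nonisomorphism outside `rad^∞` yields a path in `Γ_A`.
Hence a cycle in `ind A` through a cycle-finite module consists of modules lying on a common
oriented cycle of `Γ_A`.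

If there is an arrow `y → z` of `Γ_A` between vertices on oriented cycles, then `y` is also reached
from `z` by a path of nonzero nonisomorphisms. Otherwise `y` would be torsion-free for the torsion
pair generated by the successors of `z`, and the irreducible maps along one of the two oriented
cycles would compose to a nilpotent endomorphism that is a nonzero cancellable map. So any two
modules of `Γ` are joined by such paths in both directions, and a module that is an intermediate
term of a path from `Γ` to `Γ` lies in `Γ`.

Let `e` be the idempotent with `P_Γ = eA`, so that `e` is the sum of the `e_i` for `i` in the
support of `Γ`, and suppose that a path of `Q_A` between vertices of the support passes through a
vertex `k` outside it. The arrows of the path are elements of `rad A`, and these produce paths in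
`ind A` from `Γ` to the simple module at `k` and back. Then this simple module lies in `Γ` and `k`
in the support, a contradiction. So `e` is convex, which gives `e A (1 - e) A e = 0`. Thus
`a ↦ e a e` is a ring homomorphism onto `e A e`, and its kernel is `A (1 - e) A = t_A(Γ)`.
-/

open Relation

/-! ### Modules of finite length -/

section FiniteLength

variable {R : Type u} [Ring R]

instance ModA.isNoetherian (X : ModA R) : IsNoetherian R X.M :=
  (isFiniteLength_iff_isNoetherian_isArtinian.1 X.finLen).1

instance ModA.isArtinian (X : ModA R) : IsArtinian R X.M :=
  (isFiniteLength_iff_isNoetherian_isArtinian.1 X.finLen).2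

/-- A noetherian and artinian module as an object of `mod R`. -/
abbrev ModA.of (M : Type u) [AddCommGroup M] [Module R M] [IsNoetherian R M] [IsArtinian R M] :
    ModA R :=
  ⟨M, isFiniteLength_iff_isNoetherian_isArtinian.2 ⟨inferInstance, inferInstance⟩⟩

section Indecomposable

variable {M : Type u} [AddCommGroup M] [Module R M]

theorem IsIndecMod.eq_bot_or_eq_bot_of_isCompl (hM : IsIndecMod R M) {p q : Submodule R M}
    (h : IsCompl p q) : p = ⊥ ∨ q = ⊥ := by
  rcases hM.2 _ (Submodule.isIdempotentElem_projection h) with h0 | h1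
  · left
    rw [← Submodule.range_projection h, h0, LinearMap.range_zero]
  · right
    rw [← Submodule.ker_projection h, h1]
    exact LinearMap.ker_id

theorem exists_isCompl_of_not_isIndecMod [Nontrivial M] (hM : ¬IsIndecMod R M) :
    ∃ p q : Submodule R M, IsCompl p q ∧ p ≠ ⊤ ∧ q ≠ ⊤ := by
  obtain ⟨f, hf, hf0, hf1⟩ : ∃ f : Module.End R M, f * f = f ∧ f ≠ 0 ∧ f ≠ 1 := by
    simpa [IsIndecMod, ‹Nontrivial M›] using hM
  refine ⟨LinearMap.range f, LinearMap.ker f, LinearMap.IsIdempotentElem.isCompl hf, ?_,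
    fun h => hf0 (LinearMap.ker_eq_top.1 h)⟩
  intro h
  refine hf1 (LinearMap.ext fun x => ?_)
  obtain ⟨y, rfl⟩ := LinearMap.range_eq_top.1 h x
  exact LinearMap.congr_fun hf y

/-- **Fitting's lemma** -/
theorem IsIndecMod.exists_pow_eq_zero [IsNoetherian R M] [IsArtinian R M] (hM : IsIndecMod R M)
    {f : Module.End R M} (hf : ¬Function.Bijective f) : ∃ n : ℕ, f ^ n = 0 := by
  obtain ⟨n, hn, hn0⟩ := ((LinearMap.eventually_isCompl_ker_pow_range_pow f).and
    (Filter.eventually_ne_atTop 0)).exists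
  refine ⟨n, ?_⟩
  rcases hM.eq_bot_or_eq_bot_of_isCompl hn with hker | hrange
  · have hinj : Function.Injective (f ^ n) := LinearMap.ker_eq_bot.1 hker
    rw [Module.End.coe_pow] at hinj
    have hf_inj : Function.Injective f := by
      obtain ⟨m, rfl⟩ := Nat.exists_eq_succ_of_ne_zero hn0
      exact Function.Injective.of_comp (f := f^[m]) (by rwa [← Function.iterate_succ])
    exact absurd (IsArtinian.bijective_of_injective_endomorphism f hf_inj) hf
  · exact LinearMap.range_eq_bot.1 hrange

end Indecomposable

/-- An indecomposable direct summand `W` of `Z`, with its inclusion and projection. -/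
structure IndecSummand (R : Type u) [Ring R] (Z : Type u) [AddCommGroup Z] [Module R Z] where
  W : IndecModA R
  incl : W.1.M →ₗ[R] Z
  proj : Z →ₗ[R] W.1.M
  proj_comp_incl : proj ∘ₗ incl = LinearMap.id

/-- `Z` is a finite direct sum of indecomposable modules: the idempotents attached to finitely
many indecomposable summands add up to the identity.
Orthogonality of the idempotents is not recorded. -/
def HasIndecDecomp (R : Type u) [Ring R] (Z : Type u) [AddCommGroup Z] [Module R Z] : Prop :=
  ∃ (I : Type) (_ : Fintype I) (D : I → IndecSummand R Z),
    ∑ l, (D l).incl ∘ₗ (D l).proj = LinearMap.id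

section Decomposition

variable {Z : Type u} [AddCommGroup Z] [Module R Z]

/-- An indecomposable summand of a summand `p` of `Z`, as a summand of `Z`. -/
noncomputable def IndecSummand.ofIsCompl {p q : Submodule R Z} (h : IsCompl p q)
    (D : IndecSummand R p) : IndecSummand R Z where
  W := D.W
  incl := p.subtype ∘ₗ D.incl
  proj := D.proj ∘ₗ p.projectionOnto q h
  proj_comp_incl := by
    rw [LinearMap.comp_assoc, ← LinearMap.comp_assoc D.incl,
      Submodule.projectionOnto_comp_subtype, LinearMap.id_comp, D.proj_comp_incl]

theorem IndecSummand.sum_ofIsCompl {p q : Submodule R Z} (h : IsCompl p q) {I : Type} [Fintype I]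
    {D : I → IndecSummand R p} (hD : ∑ i, (D i).incl ∘ₗ (D i).proj = LinearMap.id) :
    ∑ i, ((D i).ofIsCompl h).incl ∘ₗ ((D i).ofIsCompl h).proj = p.projection q h := by
  ext x
  have hx := congrArg p.subtype (LinearMap.congr_fun hD (p.projectionOnto q h x))
  rw [LinearMap.sum_apply, map_sum] at hx
  exact (LinearMap.sum_apply _ _ _).trans hx

theorem HasIndecDecomp.of_isCompl {p q : Submodule R Z} (h : IsCompl p q)
    (hp : HasIndecDecomp R p) (hq : HasIndecDecomp R q) : HasIndecDecomp R Z := by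
  obtain ⟨I, _, D, hD⟩ := hp
  obtain ⟨J, _, E, hE⟩ := hq
  refine ⟨I ⊕ J, inferInstance,
    Sum.elim (fun i => (D i).ofIsCompl h) fun j => (E j).ofIsCompl h.symm, ?_⟩
  rw [Fintype.sum_sum_type]
  exact (congrArg₂ (· + ·) (IndecSummand.sum_ofIsCompl h hD)
    (IndecSummand.sum_ofIsCompl h.symm hE)).trans (Submodule.projection_add_projection_eq_id h)

theorem hasIndecDecomp (Z : Type u) [AddCommGroup Z] [Module R Z] [IsNoetherian R Z]
    [IsArtinian R Z] : HasIndecDecomp R Z := by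
  suffices ∀ (n : ℕ∞) (Z : Type u) [AddCommGroup Z] [Module R Z] [IsNoetherian R Z]
      [IsArtinian R Z], Module.length R Z = n → HasIndecDecomp R Z from this _ Z rfl
  intro n
  induction n using WellFoundedLT.induction with
  | ind n ih =>
  intro Z _ _ _ _ hZ
  rcases subsingleton_or_nontrivial Z with _ | _
  · exact ⟨Empty, inferInstance, Empty.elim, Subsingleton.elim _ _⟩
  by_cases hi : IsIndecMod R Z
  · exact ⟨Unit, inferInstance, fun _ => ⟨⟨ModA.of Z, hi⟩, LinearMap.id, LinearMap.id, rfl⟩,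
      by simp⟩
  · obtain ⟨p, q, h, hp, hq⟩ := exists_isCompl_of_not_isIndecMod hi
    exact .of_isCompl h (ih _ (hZ ▸ Submodule.length_lt hp) p rfl)
      (ih _ (hZ ▸ Submodule.length_lt hq) q rfl)

end Decomposition

section Split

variable {X Y Z : ModA R}

theorem SplitMonoMap.injective {f : X.M →ₗ[R] Y.M} (h : SplitMonoMap f) :
    Function.Injective f :=
  h.elim fun _ hr => Function.LeftInverse.injective (LinearMap.congr_fun hr)

theorem SplitEpiMap.surjective {f : X.M →ₗ[R] Y.M} (h : SplitEpiMap f) :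
    Function.Surjective f :=
  h.elim fun _ hs => Function.RightInverse.surjective (LinearMap.congr_fun hs)

theorem splitMonoMap_of_bijective {f : X.M →ₗ[R] Y.M} (h : Function.Bijective f) :
    SplitMonoMap f :=
  ⟨(LinearEquiv.ofBijective f h).symm, (LinearEquiv.ofBijective f h).symm_comp⟩

theorem splitEpiMap_of_bijective {f : X.M →ₗ[R] Y.M} (h : Function.Bijective f) :
    SplitEpiMap f :=
  ⟨(LinearEquiv.ofBijective f h).symm, (LinearEquiv.ofBijective f h).comp_symm⟩

theorem SplitMonoMap.of_comp {f : X.M →ₗ[R] Y.M} {g : Y.M →ₗ[R] Z.M}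
    (h : SplitMonoMap (X := X) (Y := Z) (g ∘ₗ f)) : SplitMonoMap f :=
  h.elim fun r hr => ⟨r ∘ₗ g, hr⟩

theorem SplitEpiMap.of_comp {f : X.M →ₗ[R] Y.M} {g : Y.M →ₗ[R] Z.M}
    (h : SplitEpiMap (X := X) (Y := Z) (g ∘ₗ f)) : SplitEpiMap g :=
  h.elim fun s hs => ⟨f ∘ₗ s, hs⟩

theorem SplitMonoMap.bijective {f : X.M →ₗ[R] Y.M} [Nontrivial X.M] (hY : Y.IsIndec)
    (h : SplitMonoMap f) : Function.Bijective f := by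
  refine ⟨h.injective, ?_⟩
  obtain ⟨r, hr⟩ := h
  have hrf : ∀ x, r (f x) = x := LinearMap.congr_fun hr
  rcases hY.2 (f ∘ₗ r) (by ext x; simp [hrf]) with h0 | h1
  · obtain ⟨x, hx⟩ := exists_ne (0 : X.M)
    refine absurd ?_ hx
    have hfx : f (r (f x)) = 0 := LinearMap.congr_fun h0 (f x)
    rw [← hrf x, ← hrf (r (f x)), hfx, map_zero]
  · exact fun y => ⟨r y, LinearMap.congr_fun h1 y⟩

theorem SplitEpiMap.bijective {f : X.M →ₗ[R] Y.M} [Nontrivial Y.M] (hX : X.IsIndec)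
    (h : SplitEpiMap f) : Function.Bijective f := by
  refine ⟨?_, h.surjective⟩
  obtain ⟨s, hs⟩ := h
  have hs_surj : Function.Surjective s := (SplitMonoMap.bijective (f := s) hX ⟨f, hs⟩).2
  exact (Function.LeftInverse.rightInverse_of_surjective (f := f) (g := s)
    (LinearMap.congr_fun hs) hs_surj).injective

end Split

/-! ### The radical of the module category -/

section Radical

variable {X Y Z : ModA R}

theorem inRad_of_not_bijective (hX : X.IsIndec) (hY : Y.IsIndec) {f : X.M →ₗ[R] Y.M}
    (hf : ¬Function.Bijective f) : InRad f := by
  intro W hW g h hb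
  have := hW.1
  have := hX.1
  have hhf : SplitMonoMap (X := W) (Y := W) ((h ∘ₗ f) ∘ₗ g) := splitMonoMap_of_bijective hb
  have hg : Function.Bijective g := (SplitMonoMap.of_comp (Y := X) hhf).bijective hX
  have hhf_bij : Function.Bijective (h ∘ₗ f) :=
    (Function.Bijective.of_comp_iff (h ∘ₗ f) hg).1 hb
  exact hf (SplitMonoMap.bijective hY
    (.of_comp (Z := W) (g := h) (splitMonoMap_of_bijective hhf_bij)))

theorem InRad.comp {f : Y.M →ₗ[R] Z.M} (hf : InRad f) (g : X.M →ₗ[R] Y.M) :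
    InRad (X := X) (Y := Z) (f ∘ₗ g) :=
  fun W hW a b => hf W hW (g ∘ₗ a) b

theorem InRad.comp_mem_radPow {n : ℕ} {g : X.M →ₗ[R] Y.M} {h : Y.M →ₗ[R] Z.M} (hg : InRad g)
    (hh : h ∈ radPow R n Y Z) : h ∘ₗ g ∈ radPow R (n + 1) X Z :=
  AddSubgroup.subset_closure ⟨Y, g, h, hg, hh, rfl⟩

/-- The powers of the radical are defined by prepending radical maps; appending one also raises
the exponent. -/
theorem comp_mem_radPow_of_inRad {n : ℕ} {g : X.M →ₗ[R] Y.M} {h : Y.M →ₗ[R] Z.M}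
    (hg : g ∈ radPow R n X Y) (hh : InRad h) : h ∘ₗ g ∈ radPow R (n + 1) X Z := by
  induction n generalizing X with
  | zero => exact (hh.comp g).comp_mem_radPow (h := LinearMap.id) (AddSubgroup.mem_top _)
  | succ n ih =>
    rw [radPow] at hg
    induction hg using AddSubgroup.closure_induction with
    | mem _ hx =>
      obtain ⟨W, a, b, ha, hb, rfl⟩ := hx
      exact ha.comp_mem_radPow (ih hb)
    | zero => rw [LinearMap.comp_zero]; exact zero_mem _
    | add _ _ _ _ hx hy => rw [LinearMap.comp_add]; exact add_mem hx hy
    | neg _ _ hx => rw [LinearMap.comp_neg]; exact neg_mem hx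

end Radical

end FiniteLength

/-! ### Paths of nonzero nonisomorphisms and cycle-finite vertices -/

section Paths

variable {R : Type u} [Ring R]

theorem ARVertex.mk_eq_mk_iff {X Y : IndecModA R} :
    ARVertex.mk X = ARVertex.mk Y ↔ X.1.Iso Y.1 :=
  ⟨fun h => Quotient.exact h, fun h => Quotient.sound h⟩

/-- A chosen module with the given vertex. -/
noncomputable def ARVertex.rep (x : ARVertex R) : IndecModA R := Quotient.out x

theorem ARVertex.mk_rep (x : ARVertex R) : ARVertex.mk x.rep = x := Quotient.out_eq x

/-- There is a nonzero nonisomorphism between modules with vertices `x` and `y`: one step of a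
cycle in `ind R`. -/
def HomArrow (x y : ARVertex R) : Prop :=
  ∃ X Y : IndecModA R, ARVertex.mk X = x ∧ ARVertex.mk Y = y ∧
    ∃ f : X.1.M →ₗ[R] Y.1.M, f ≠ 0 ∧ ¬Function.Bijective f

theorem homArrow_mk_iff {X Y : IndecModA R} : HomArrow (ARVertex.mk X) (ARVertex.mk Y) ↔
    ∃ f : X.1.M →ₗ[R] Y.1.M, f ≠ 0 ∧ ¬Function.Bijective f := by
  refine ⟨?_, fun h => ⟨X, Y, rfl, rfl, h⟩⟩
  rintro ⟨X', Y', hX, hY, f, hf, hb⟩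
  obtain ⟨a⟩ := ARVertex.mk_eq_mk_iff.1 hX
  obtain ⟨b⟩ := ARVertex.mk_eq_mk_iff.1 hY
  refine ⟨b ∘ₗ f ∘ₗ a.symm, fun h0 => hf ?_, fun h0 => hb ?_⟩
  · ext x
    simpa using LinearMap.congr_fun h0 (a x)
  · have h1 : Function.Bijective (b ∘ (f ∘ a.symm)) := h0
    rwa [b.bijective.of_comp_iff', Function.Bijective.of_comp_iff _ a.symm.bijective] at h1

theorem reflTransGen_homArrow_of_ne_zero {X Y : IndecModA R} {f : X.1.M →ₗ[R] Y.1.M}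
    (hf : f ≠ 0) : ReflTransGen HomArrow (ARVertex.mk X) (ARVertex.mk Y) := by
  by_cases hb : Function.Bijective f
  · rw [ARVertex.mk_eq_mk_iff.2 ⟨LinearEquiv.ofBijective f hb⟩]
  · exact .single (homArrow_mk_iff.2 ⟨f, hf, hb⟩)

theorem IsIrred.not_bijective {X Y : ModA R} {f : X.M →ₗ[R] Y.M} (h : IsIrred f) :
    ¬Function.Bijective f := fun hb => h.1 (splitMonoMap_of_bijective hb)

theorem IsIrred.ne_zero {X Y : ModA R} [Nontrivial X.M] [Nontrivial Y.M]
    {f : X.M →ₗ[R] Y.M} (h : IsIrred f) : f ≠ 0 := by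
  rintro rfl
  rcases h.2.2 (ModA.of PUnit) 0 0 (by simp) with hg | hg
  · exact not_subsingleton X.M hg.injective.subsingleton
  · exact not_subsingleton Y.M hg.surjective.subsingleton

theorem ARArrow.homArrow {x y : ARVertex R} (h : ARArrow x y) : HomArrow x y := by
  obtain ⟨X, Y, f, hf, hx, hy⟩ := h
  have := X.2.1
  have := Y.2.1
  exact ⟨X, Y, hx, hy, f, hf.ne_zero, hf.not_bijective⟩

theorem exists_sum_comp_of_not_isIrred {X Y : IndecModA R} {f : X.1.M →ₗ[R] Y.1.M}
    (hb : ¬Function.Bijective f) (hf : ¬IsIrred f) :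
    ∃ (I : Type) (_ : Fintype I) (W : I → IndecModA R) (g : ∀ i, X.1.M →ₗ[R] (W i).1.M)
      (h : ∀ i, (W i).1.M →ₗ[R] Y.1.M), f = ∑ i, h i ∘ₗ g i ∧
        ∀ i, ¬Function.Bijective (g i) ∧ ¬Function.Bijective (h i) := by
  have := X.2.1
  have := Y.2.1
  obtain ⟨Z, g, h, rfl, hg, hh⟩ : ∃ (Z : ModA R) (g : X.1.M →ₗ[R] Z.M) (h : Z.M →ₗ[R] Y.1.M),
      h ∘ₗ g = f ∧ ¬SplitMonoMap g ∧ ¬SplitEpiMap h := by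
    simpa [IsIrred, mt (SplitMonoMap.bijective Y.2) hb, mt (SplitEpiMap.bijective X.2) hb]
      using hf
  obtain ⟨I, _, D, hD⟩ := hasIndecDecomp (R := R) Z.M
  refine ⟨I, inferInstance, fun i => (D i).W, fun i => (D i).proj ∘ₗ g,
    fun i => h ∘ₗ (D i).incl, ?_, fun i => ⟨fun hb => hg ?_, fun hb => hh ?_⟩⟩
  · ext x
    simpa using congrArg h (LinearMap.congr_fun hD (g x)).symm
  · exact SplitMonoMap.of_comp (Z := (D i).W.1) (splitMonoMap_of_bijective hb)
  · exact SplitEpiMap.of_comp (X := (D i).W.1) (splitEpiMap_of_bijective hb)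

theorem mem_radPow_of_not_transGen_arArrow (n : ℕ) {X Y : IndecModA R} {f : X.1.M →ₗ[R] Y.1.M}
    (hb : ¬Function.Bijective f) (hXY : ¬TransGen ARArrow (ARVertex.mk X) (ARVertex.mk Y)) :
    f ∈ radPow R n X.1 Y.1 := by
  induction n generalizing X Y with
  | zero => exact AddSubgroup.mem_top f
  | succ n ih =>
    obtain ⟨I, _, W, g, h, rfl, hgh⟩ := exists_sum_comp_of_not_isIrred hb
      fun hf => hXY (.single ⟨X, Y, f, hf, rfl, rfl⟩)
    refine sum_mem fun i _ => ?_
    by_cases hXW : TransGen ARArrow (ARVertex.mk X) (ARVertex.mk (W i))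
    · exact (inRad_of_not_bijective X.2 (W i).2 (hgh i).1).comp_mem_radPow
        (ih (hgh i).2 fun hWY => hXY (hXW.trans hWY))
    · exact comp_mem_radPow_of_inRad (ih (hgh i).1 hXW)
        (inRad_of_not_bijective (W i).2 Y.2 (hgh i).2)

theorem exists_relSeries_of_reflTransGen {α : Type*} {r : α → α → Prop} {a b : α}
    (h : ReflTransGen r a b) :
    ∃ p : RelSeries {x : α × α | r x.1 x.2}, p.head = a ∧ p.last = b := by
  induction h with
  | refl => exact ⟨RelSeries.singleton _ a, rfl, rfl⟩
  | tail _ hbc ih =>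
    obtain ⟨p, rfl, rfl⟩ := ih
    exact ⟨p.snoc _ hbc, by simp, by simp⟩

theorem IsCycleFiniteVertex.transGen_arArrow_of_relSeries {v : ARVertex R}
    (hv : IsCycleFiniteVertex v) (p : RelSeries {x : ARVertex R × ARVertex R | HomArrow x.1 x.2})
    (hclosed : p.last = p.head) (hmem : v ∈ p) (i : Fin p.length) :
    TransGen ARArrow (p.toFun i.castSucc) (p.toFun i.succ) := by
  obtain ⟨X, rfl, -, hfin⟩ := hv
  have hstep (j : Fin p.length) :
      ∃ f : (p.toFun j.castSucc).rep.1.M →ₗ[R] (p.toFun j.succ).rep.1.M,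
        f ≠ 0 ∧ ¬Function.Bijective f := by
    rw [← homArrow_mk_iff, ARVertex.mk_rep, ARVertex.mk_rep]
    exact p.step j
  choose f hf0 hfb using hstep
  let c : ModCycle R :=
    { len := p.length
      len_pos := i.pos
      obj := fun j => (p.toFun j).rep.1
      obj_indec := fun j => (p.toFun j).rep.2
      closed := congrArg (fun x => x.rep.1) hclosed
      hom := f
      hom_ne_zero := hf0
      hom_not_iso := hfb }
  have hpass : c.Passes X.1 := by
    obtain ⟨j, hj⟩ := hmem
    exact ⟨j, ARVertex.mk_eq_mk_iff.1 ((ARVertex.mk_rep _).trans hj)⟩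
  by_contra hno
  refine hfin c hpass i fun n => ?_
  rw [← ARVertex.mk_rep (p.toFun i.castSucc), ← ARVertex.mk_rep (p.toFun i.succ)] at hno
  exact mem_radPow_of_not_transGen_arArrow n (hfb i) hno

theorem IsCycleFiniteVertex.transGen_arArrow {v x y : ARVertex R} (hv : IsCycleFiniteVertex v)
    (hvx : ReflTransGen HomArrow v x) (hxy : HomArrow x y) (hyv : ReflTransGen HomArrow y v) :
    TransGen ARArrow x y := by
  obtain ⟨p, rfl, hp⟩ := exists_relSeries_of_reflTransGen hyv
  obtain ⟨q, hq, rfl⟩ := exists_relSeries_of_reflTransGen hvx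
  have hfst : (q.append p hxy).toFun (Fin.castSucc ⟨q.length, by simp⟩) = q.last :=
    RelSeries.append_apply_left q p hxy (Fin.last _)
  have hsnd : (q.append p hxy).toFun (Fin.succ ⟨q.length, by simp⟩) = p.head :=
    RelSeries.append_apply_right q p hxy 0
  rw [← hfst, ← hsnd]
  exact hv.transGen_arArrow_of_relSeries _ (by simp [hp, hq])
    (by simpa [hq] using (q.append p hxy).head_mem) _

theorem IsCycleFiniteVertex.reflTransGen_arArrow {v x : ARVertex R} (hv : IsCycleFiniteVertex v)
    (hvx : ReflTransGen HomArrow v x) (hxv : ReflTransGen HomArrow x v) :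
    ReflTransGen ARArrow v x ∧ ReflTransGen ARArrow x v := by
  constructor
  · induction hvx with
    | refl => exact .refl
    | tail hvx hxy ih =>
      exact (ih (.head hxy hxv)).trans (hv.transGen_arArrow hvx hxy hxv).to_reflTransGen
  · induction hxv using ReflTransGen.head_induction_on with
    | refl => exact .refl
    | head hxy hyv ih =>
      exact (hv.transGen_arArrow hvx hxy hyv).to_reflTransGen.trans (ih (hvx.tail hxy))

end Paths

/-! ### Torsion classes and relative projectivity -/

section Torsion

variable {R : Type u} [Ring R]

theorem exists_comp_eq_of_ker_le_ker {E F N : Type*} [AddCommGroup E] [Module R E]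
    [AddCommGroup F] [Module R F] [AddCommGroup N] [Module R N] {p : E →ₗ[R] N}
    (hp : Function.Surjective p) {f : E →ₗ[R] F} (h : LinearMap.ker p ≤ LinearMap.ker f) :
    ∃ f' : N →ₗ[R] F, f' ∘ₗ p = f := by
  refine ⟨(LinearMap.ker p).liftQ f h ∘ₗ (p.quotKerEquivOfSurjective hp).symm, ?_⟩
  ext x
  have hx : (p.quotKerEquivOfSurjective hp).symm (p x) = (LinearMap.ker p).mkQ x :=
    (LinearEquiv.symm_apply_eq _).2 rfl
  exact congrArg ((LinearMap.ker p).liftQ f h) hx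

theorem exists_comp_eq_of_range_le_range {E F N : Type*} [AddCommGroup E] [Module R E]
    [AddCommGroup F] [Module R F] [AddCommGroup N] [Module R N] {i : N →ₗ[R] E}
    (hi : Function.Injective i) {f : F →ₗ[R] E} (h : LinearMap.range f ≤ LinearMap.range i) :
    ∃ f' : F →ₗ[R] N, i ∘ₗ f' = f := by
  let f₀ := f.codRestrict (LinearMap.range i) fun x => h ⟨x, rfl⟩
  refine ⟨(LinearEquiv.ofInjective i hi).symm ∘ₗ f₀, ?_⟩
  ext x
  exact congrArg Subtype.val ((LinearEquiv.ofInjective i hi).apply_symm_apply (f₀ x))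

variable (S : ModA R → Prop)

/-- `N` belongs to the torsion-free class right orthogonal to `S`. -/
def TorsionFree (N : Type u) [AddCommGroup N] [Module R N] : Prop :=
  ∀ X : ModA R, S X → ∀ f : X.M →ₗ[R] N, f = 0

/-- `M` belongs to the torsion class generated by `S`. -/
def Torsion (M : Type u) [AddCommGroup M] [Module R M] : Prop :=
  ∀ (N : Type u) [AddCommGroup N] [Module R N], TorsionFree S N → ∀ f : M →ₗ[R] N, f = 0

/-- `Ext¹(N, K) = 0` for all torsion modules `K`, phrased as a lifting property: maps out of `N`
lift along every surjection `p : E → W`, with `E` of finite length, whose kernel is a quotient of a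
torsion module `K`. -/
def RelProjective (N : Type u) [AddCommGroup N] [Module R N] : Prop :=
  ∀ (E : Type u) [AddCommGroup E] [Module R E] [IsNoetherian R E] [IsArtinian R E]
    (K W : Type u) [AddCommGroup K] [Module R K] [AddCommGroup W] [Module R W]
    (k : K →ₗ[R] E) (p : E →ₗ[R] W), Function.Surjective p → Function.Exact k p → Torsion S K →
    ∀ q : N →ₗ[R] W, ∃ q' : N →ₗ[R] E, p ∘ₗ q' = q

/-- `Ext¹(Q, M) = 0` for all torsion-free modules `Q`, phrased as an extension property: maps into
`M` extend along every injection `i : W → E`, with `E` of finite length, whose cokernel embeds into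
a torsion-free module `Q`. -/
def RelInjective (M : Type u) [AddCommGroup M] [Module R M] : Prop :=
  ∀ (E : Type u) [AddCommGroup E] [Module R E] [IsNoetherian R E] [IsArtinian R E]
    (W Q : Type u) [AddCommGroup W] [Module R W] [AddCommGroup Q] [Module R Q]
    (i : W →ₗ[R] E) (c : E →ₗ[R] Q), Function.Injective i → Function.Exact i c →
    TorsionFree S Q → ∀ q : W →ₗ[R] M, ∃ q' : E →ₗ[R] M, q' ∘ₗ i = q

/-- The class `S` contains every indecomposable module that receives a nonzero map from `S`. -/
def SuccClosed : Prop :=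
  ∀ X Y : ModA R, S X → Y.IsIndec → ∀ f : X.M →ₗ[R] Y.M, f ≠ 0 → S Y

variable {S}
variable {E K M N P Q W : Type u} [AddCommGroup E] [Module R E] [AddCommGroup K] [Module R K]
  [AddCommGroup M] [Module R M] [AddCommGroup N] [Module R N] [AddCommGroup P] [Module R P]
  [AddCommGroup Q] [Module R Q] [AddCommGroup W] [Module R W]

theorem Torsion.of_mem {X : ModA R} (h : S X) : Torsion S X.M := fun _ _ _ hN f => hN X h f

theorem Torsion.of_exact {k : K →ₗ[R] E} {p : E →ₗ[R] N} (hp : Function.Surjective p)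
    (hkp : Function.Exact k p) (hK : Torsion S K) (hN : Torsion S N) : Torsion S E := by
  intro F _ _ hF f
  obtain ⟨f', rfl⟩ : ∃ f', f' ∘ₗ p = f := by
    refine exists_comp_eq_of_ker_le_ker hp fun x hx => ?_
    obtain ⟨a, rfl⟩ := (hkp x).1 hx
    exact LinearMap.congr_fun (hK F hF (f ∘ₗ k)) a
  rw [hN F hF f', LinearMap.zero_comp]

theorem TorsionFree.of_exact {i : M →ₗ[R] E} {c : E →ₗ[R] Q} (hi : Function.Injective i)
    (hic : Function.Exact i c) (hM : TorsionFree S M) (hQ : TorsionFree S Q) :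
    TorsionFree S E := by
  intro X hX f
  obtain ⟨f', rfl⟩ : ∃ f', i ∘ₗ f' = f := by
    refine exists_comp_eq_of_range_le_range hi ?_
    rintro _ ⟨x, rfl⟩
    exact (hic _).1 (LinearMap.congr_fun (hQ X hX (c ∘ₗ f)) x)
  rw [hM X hX f', LinearMap.comp_zero]

theorem TorsionFree.of_not_mem (hS : SuccClosed S) {Y : ModA R} (hY : Y.IsIndec) (h : ¬S Y) :
    TorsionFree S Y.M := fun X hX f => by_contra fun hf => h (hS X Y hX hY f hf)

/-- The witness is the projection onto the indecomposable summands that belong to `S`. -/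
theorem SuccClosed.exists_torsion_projection (hS : SuccClosed S) (E : Type u) [AddCommGroup E]
    [Module R E] [IsNoetherian R E] [IsArtinian R E] :
    ∃ e : E →ₗ[R] E,
      (∀ (N : Type u) [AddCommGroup N] [Module R N], TorsionFree S N →
        ∀ f : E →ₗ[R] N, f ∘ₗ e = 0) ∧
      ∀ (M : Type u) [AddCommGroup M] [Module R M], Torsion S M →
        ∀ g : M →ₗ[R] E, e ∘ₗ g = g := by
  classical
  obtain ⟨I, _, D, hD⟩ := hasIndecDecomp (R := R) E
  refine ⟨∑ l, if S (D l).W.1 then (D l).incl ∘ₗ (D l).proj else 0, ?_, ?_⟩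
  · intro N _ _ hN f
    ext x
    simp only [LinearMap.comp_apply, LinearMap.sum_apply, map_sum]
    refine Finset.sum_eq_zero fun l _ => ?_
    split_ifs with h
    · exact LinearMap.congr_fun (hN _ h (f ∘ₗ (D l).incl)) ((D l).proj x)
    · exact map_zero f
  · intro M _ _ hM g
    ext x
    conv_rhs => rw [← LinearMap.id_apply (R := R) (g x), ← hD]
    simp only [LinearMap.comp_apply, LinearMap.sum_apply]
    refine Finset.sum_congr rfl fun l _ => ?_
    split_ifs with h
    · rfl
    · have hx : (D l).proj (g x) = 0 :=
        LinearMap.congr_fun (hM _ (.of_not_mem hS (D l).W.2 h) ((D l).proj ∘ₗ g)) x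
      rw [hx, map_zero, LinearMap.zero_apply]

/-- By pullback, it suffices to split the surjections onto `N`. -/
theorem RelProjective.of_split [IsNoetherian R N] [IsArtinian R N]
    (h : ∀ (E : Type u) [AddCommGroup E] [Module R E] [IsNoetherian R E] [IsArtinian R E]
      (K : Type u) [AddCommGroup K] [Module R K] (k : K →ₗ[R] E) (p : E →ₗ[R] N),
      Function.Surjective p → Function.Exact k p → Torsion S K →
      ∃ s : N →ₗ[R] E, p ∘ₗ s = LinearMap.id) : RelProjective S N := by
  intro E _ _ _ _ K W _ _ _ _ k p hp hkp hK q
  let V : Submodule R (E × N) := LinearMap.eqLocus (p ∘ₗ .fst R E N) (q ∘ₗ .snd R E N)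
  let k' : K →ₗ[R] V := (LinearMap.inl R E N ∘ₗ k).codRestrict V fun a =>
    (hkp.apply_apply_eq_zero a).trans (map_zero q).symm
  obtain ⟨s, hs⟩ := h V K k' (.snd R E N ∘ₗ V.subtype)
    (fun n => (hp (q n)).elim fun e he => ⟨⟨(e, n), he⟩, rfl⟩) (by
      rintro ⟨⟨e, n⟩, hen⟩
      constructor
      · rintro rfl
        obtain ⟨a, rfl⟩ := (hkp e).1 (hen.trans (map_zero q))
        exact ⟨a, rfl⟩
      · rintro ⟨a, ha⟩
        exact congrArg (fun v : V => v.1.2) ha.symm) hK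
  refine ⟨.fst R E N ∘ₗ V.subtype ∘ₗ s, ?_⟩
  ext n
  exact (s n).2.trans (congrArg q (LinearMap.congr_fun hs n))

/-- By pushout, it suffices to split the injections out of `M`. -/
theorem RelInjective.of_split [IsNoetherian R M] [IsArtinian R M]
    (h : ∀ (E : Type u) [AddCommGroup E] [Module R E] [IsNoetherian R E] [IsArtinian R E]
      (Q : Type u) [AddCommGroup Q] [Module R Q] (i : M →ₗ[R] E) (c : E →ₗ[R] Q),
      Function.Injective i → Function.Exact i c → TorsionFree S Q →
      ∃ r : E →ₗ[R] M, r ∘ₗ i = LinearMap.id) : RelInjective S M := by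
  intro E _ _ _ _ W Q _ _ _ _ i c hi hic hQ q
  let V : Submodule R (M × E) := LinearMap.range (q.prod (-i))
  have hV : V.mkQ ∘ₗ .inl R M E ∘ₗ q = V.mkQ ∘ₗ .inr R M E ∘ₗ i :=
    LinearMap.ext fun w => (Submodule.Quotient.eq V).2 ⟨w, by simp⟩
  let c' : (M × E) ⧸ V →ₗ[R] Q := V.liftQ (c ∘ₗ .snd R M E) (by
    rintro _ ⟨w, rfl⟩
    simp [hic.apply_apply_eq_zero])
  obtain ⟨r, hr⟩ := h ((M × E) ⧸ V) Q (V.mkQ ∘ₗ .inl R M E) c' (by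
      rw [injective_iff_map_eq_zero]
      intro m hm
      obtain ⟨w, hw⟩ := (Submodule.Quotient.mk_eq_zero V).1 hm
      obtain ⟨rfl, hiw⟩ := Prod.mk.inj hw
      rw [(map_eq_zero_iff i hi).1 (neg_eq_zero.1 hiw), map_zero]) (by
      intro x
      obtain ⟨⟨m, e⟩, rfl⟩ := V.mkQ_surjective x
      constructor
      · intro hx
        obtain ⟨w, rfl⟩ := (hic e).1 hx
        exact ⟨m + q w, (Submodule.Quotient.eq V).2 ⟨w, by simp⟩⟩
      · rintro ⟨m', hm'⟩
        rw [← hm']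
        exact map_zero c) hQ
  refine ⟨r ∘ₗ V.mkQ ∘ₗ .inr R M E, ?_⟩
  calc (r ∘ₗ V.mkQ ∘ₗ .inr R M E) ∘ₗ i
      = r ∘ₗ V.mkQ ∘ₗ .inl R M E ∘ₗ q := congrArg (r ∘ₗ ·) hV.symm
    _ = q := congrArg (· ∘ₗ q) hr

theorem TorsionFree.relProjective (hS : SuccClosed S) [IsNoetherian R N] [IsArtinian R N]
    (hN : TorsionFree S N) : RelProjective S N := by
  refine .of_split fun E _ _ _ _ K _ _ k p hp hkp hK => ?_
  obtain ⟨e, hfree, htors⟩ := hS.exists_torsion_projection E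
  obtain ⟨s, hs⟩ : ∃ s, s ∘ₗ p = LinearMap.id - e := by
    refine exists_comp_eq_of_ker_le_ker hp fun x hx => ?_
    obtain ⟨a, rfl⟩ := (hkp x).1 hx
    exact sub_eq_zero.2 (LinearMap.congr_fun (htors K hK k) a).symm
  refine ⟨s, (LinearMap.cancel_right hp).1 ?_⟩
  rw [LinearMap.comp_assoc, hs, LinearMap.comp_sub, hfree N hN p, sub_zero, LinearMap.comp_id,
    LinearMap.id_comp]

theorem Torsion.relInjective (hS : SuccClosed S) [IsNoetherian R M] [IsArtinian R M]
    (hM : Torsion S M) : RelInjective S M := by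
  refine .of_split fun E _ _ _ _ Q _ _ i c hi hic hQ => ?_
  obtain ⟨e, hfree, htors⟩ := hS.exists_torsion_projection E
  obtain ⟨r, hr⟩ : ∃ r, i ∘ₗ r = e := by
    refine exists_comp_eq_of_range_le_range hi ?_
    rintro _ ⟨x, rfl⟩
    exact (hic _).1 (LinearMap.congr_fun (hfree Q hQ c) x)
  refine ⟨r, (LinearMap.cancel_left hi).1 ?_⟩
  rw [← LinearMap.comp_assoc, hr, htors M hM i, LinearMap.comp_id]

theorem RelProjective.of_retract (hM : RelProjective S M) {i : N →ₗ[R] M} {r : M →ₗ[R] N}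
    (hri : r ∘ₗ i = LinearMap.id) : RelProjective S N := by
  intro E _ _ _ _ K W _ _ _ _ k p hp hkp hK q
  obtain ⟨q', hq'⟩ := hM E K W k p hp hkp hK (q ∘ₗ r)
  exact ⟨q' ∘ₗ i, by rw [← LinearMap.comp_assoc, hq', LinearMap.comp_assoc, hri, LinearMap.comp_id]⟩

theorem RelInjective.of_retract (hM : RelInjective S M) {i : N →ₗ[R] M} {r : M →ₗ[R] N}
    (hri : r ∘ₗ i = LinearMap.id) : RelInjective S N := by
  intro E _ _ _ _ W Q _ _ _ _ j c hj hjc hQ q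
  obtain ⟨q', hq'⟩ := hM E W Q j c hj hjc hQ (i ∘ₗ q)
  exact ⟨r ∘ₗ q', by rw [LinearMap.comp_assoc, hq', ← LinearMap.comp_assoc, hri, LinearMap.id_comp]⟩

theorem exists_section_of_quotient_section {a : P →ₗ[R] M} {b : M →ₗ[R] N} {q : P →ₗ[R] E}
    {p : E →ₗ[R] M} {π : E ⧸ LinearMap.range q →ₗ[R] N} {s : N →ₗ[R] E ⧸ LinearMap.range q}
    (ha : Function.Injective a) (hab : Function.Exact a b) (hpq : p ∘ₗ q = a)
    (hπ : π ∘ₗ (LinearMap.range q).mkQ = b ∘ₗ p) (hs : π ∘ₗ s = LinearMap.id) :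
    ∃ t : M →ₗ[R] E, p ∘ₗ t = LinearMap.id := by
  have hpq (x : P) : p (q x) = a x := LinearMap.congr_fun hpq x
  have hπs {n : N} {e : E} (h : s n = (LinearMap.range q).mkQ e) : b (p e) = n :=
    (LinearMap.congr_fun hπ e).symm.trans ((congrArg π h.symm).trans (LinearMap.congr_fun hs n))
  -- `p` restricts to an isomorphism from the preimage of the complement `range s` of `ker π`.
  let L : Submodule R E := (LinearMap.range s).comap (LinearMap.range q).mkQ
  have hL : Function.Bijective (p ∘ₗ L.subtype) := by
    constructor
    · rw [injective_iff_map_eq_zero]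
      rintro ⟨e, n, hn⟩ (he : p e = 0)
      have hn0 : n = 0 := by rw [← hπs hn, he, map_zero]
      obtain ⟨x, rfl⟩ := (Submodule.Quotient.mk_eq_zero _).1 (hn.symm.trans (by rw [hn0, map_zero]))
      rw [hpq, map_eq_zero_iff a ha] at he
      exact Subtype.ext (by simp [he])
    · intro m
      obtain ⟨e, he⟩ := (LinearMap.range q).mkQ_surjective (s (b m))
      obtain ⟨x, hx⟩ := (hab (p e - m)).1 (by rw [map_sub, hπs he.symm, sub_self])
      have heL : e - q x ∈ L := ⟨b m, he.symm.trans ((Submodule.Quotient.eq _).2 (by simp))⟩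
      exact ⟨⟨e - q x, heL⟩, by simp [hpq, hx]⟩
  exact ⟨L.subtype ∘ₗ (LinearEquiv.ofBijective _ hL).symm,
    LinearMap.ext (LinearEquiv.ofBijective _ hL).apply_symm_apply⟩

theorem exists_retraction_of_ker_retraction {a : P →ₗ[R] M} {b : M →ₗ[R] N} {i : M →ₗ[R] E}
    {q : E →ₗ[R] N} {j : P →ₗ[R] LinearMap.ker q} {r : LinearMap.ker q →ₗ[R] P}
    (hb : Function.Surjective b) (hab : Function.Exact a b) (hqi : q ∘ₗ i = b)
    (hj : (LinearMap.ker q).subtype ∘ₗ j = i ∘ₗ a) (hr : r ∘ₗ j = LinearMap.id) :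
    ∃ t : E →ₗ[R] M, t ∘ₗ i = LinearMap.id := by
  have hqi (m : M) : q (i m) = b m := LinearMap.congr_fun hqi m
  have hj (x : P) : (j x : E) = i (a x) := LinearMap.congr_fun hj x
  have hrj (x : P) : r (j x) = x := LinearMap.congr_fun hr x
  -- `M` maps isomorphically onto the quotient of `E` by the complement `ker r` of `range j`.
  let L : Submodule R E := (LinearMap.ker r).map (LinearMap.ker q).subtype
  have hL : Function.Bijective (L.mkQ ∘ₗ i) := by
    constructor
    · rw [injective_iff_map_eq_zero]
      intro m hm
      obtain ⟨v, hv, hvm⟩ := (Submodule.Quotient.mk_eq_zero L).1 hm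
      obtain ⟨x, rfl⟩ := (hab m).1 (by rw [← hqi, ← hvm]; exact v.2)
      obtain rfl : v = j x := Subtype.ext (hvm.trans (hj x).symm)
      rw [← hrj x, LinearMap.mem_ker.1 hv, map_zero]
    · intro y
      obtain ⟨e, rfl⟩ := L.mkQ_surjective y
      obtain ⟨m, hm⟩ := hb (q e)
      let v : LinearMap.ker q := ⟨e - i m, by rw [LinearMap.mem_ker, map_sub, hqi, hm, sub_self]⟩
      refine ⟨m + a (r v), ((Submodule.Quotient.eq L).2 ⟨v - j (r v), ?_, ?_⟩).symm⟩
      · rw [SetLike.mem_coe, LinearMap.mem_ker, map_sub, hrj, sub_self]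
      · rw [map_sub, map_add, ← hj, ← sub_sub]
        rfl
  exact ⟨(LinearEquiv.ofBijective _ hL).symm ∘ₗ L.mkQ,
    LinearMap.ext (LinearEquiv.ofBijective _ hL).symm_apply_apply⟩

theorem RelProjective.of_exact [IsNoetherian R M] [IsArtinian R M] {a : P →ₗ[R] M}
    {b : M →ₗ[R] N} (ha : Function.Injective a) (hb : Function.Surjective b)
    (hab : Function.Exact a b) (hP : RelProjective S P) (hN : RelProjective S N) :
    RelProjective S M := by
  refine .of_split fun E _ _ _ _ K _ _ k p hp hkp hK => ?_
  obtain ⟨q, hq⟩ := hP E K M k p hp hkp hK a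
  have hpq (x : P) : p (q x) = a x := LinearMap.congr_fun hq x
  let V : Submodule R E := LinearMap.range q
  let π : E ⧸ V →ₗ[R] N := V.liftQ (b ∘ₗ p) (by
    rintro _ ⟨x, rfl⟩
    exact (congrArg b (hpq x)).trans (hab.apply_apply_eq_zero x))
  have hker : Function.Exact (V.mkQ ∘ₗ k) π := by
    intro y
    obtain ⟨e, rfl⟩ := V.mkQ_surjective y
    constructor
    · intro he
      obtain ⟨x, hx⟩ := (hab (p e)).1 he
      obtain ⟨z, hz⟩ := (hkp (e - q x)).1 (by rw [map_sub, hpq, hx, sub_self])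
      exact ⟨z, (Submodule.Quotient.eq V).2 ⟨-x, by simp [hz]⟩⟩
    · rintro ⟨z, hz⟩
      rw [← hz]
      exact (congrArg b (hkp.apply_apply_eq_zero z)).trans (map_zero b)
  obtain ⟨s, hs⟩ := hN (E ⧸ V) K N (V.mkQ ∘ₗ k) π
    (fun n => ((hb.comp hp) n).elim fun e he => ⟨V.mkQ e, he⟩) hker hK LinearMap.id
  exact exists_section_of_quotient_section ha hab hq (V.liftQ_mkQ _ _) hs

theorem RelInjective.of_exact [IsNoetherian R M] [IsArtinian R M] {a : P →ₗ[R] M}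
    {b : M →ₗ[R] N} (ha : Function.Injective a) (hb : Function.Surjective b)
    (hab : Function.Exact a b) (hP : RelInjective S P) (hN : RelInjective S N) :
    RelInjective S M := by
  refine .of_split fun E _ _ _ _ Q _ _ i c hi hic hQ => ?_
  obtain ⟨q, hq⟩ := hN E M Q i c hi hic hQ b
  have hqi (m : M) : q (i m) = b m := LinearMap.congr_fun hq m
  let V : Submodule R E := LinearMap.ker q
  let j : P →ₗ[R] V := (i ∘ₗ a).codRestrict V fun x =>
    (hqi (a x)).trans (hab.apply_apply_eq_zero x)
  have hj : Function.Exact j (c ∘ₗ V.subtype) := by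
    rintro ⟨v, hv⟩
    constructor
    · intro hcv
      obtain ⟨m, rfl⟩ := (hic v).1 hcv
      obtain ⟨x, rfl⟩ := (hab m).1 ((hqi m).symm.trans hv)
      exact ⟨x, rfl⟩
    · rintro ⟨x, hx⟩
      rw [← hx]
      exact hic.apply_apply_eq_zero (a x)
  obtain ⟨r, hr⟩ := hP V P Q j (c ∘ₗ V.subtype)
    (fun x y hxy => ha (hi (congrArg Subtype.val hxy))) hj hQ LinearMap.id
  exact exists_retraction_of_ker_retraction hb hab hq (LinearMap.subtype_comp_codRestrict ..) hr

end Torsion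

/-! ### Irreducible maps and relative projectivity -/

section Irreducible

variable {R : Type u} [Ring R] {X X' Y Y' : ModA R}

theorem IsIrred.injective_or_surjective {f : X.M →ₗ[R] Y.M} (h : IsIrred f) :
    Function.Injective f ∨ Function.Surjective f := by
  let W := ModA.of (R := R) (LinearMap.range f)
  refine (h.2.2 W f.rangeRestrict (LinearMap.range f).subtype rfl).imp (fun hf => ?_) fun hf => ?_
  · exact Subtype.val_injective.comp hf.injective
  · exact LinearMap.range_eq_top.1 ((Submodule.range_subtype _).symm.trans
      (LinearMap.range_eq_top.2 hf.surjective))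

theorem IsIrred.comp_equiv {f : X.M →ₗ[R] Y.M} (h : IsIrred f) (e : X'.M ≃ₗ[R] X.M) :
    IsIrred (X := X') (Y := Y) (f ∘ₗ e) := by
  refine ⟨fun ⟨r, hr⟩ => h.1 ⟨e ∘ₗ r, ?_⟩, fun ⟨s, hs⟩ => h.2.1 ⟨e ∘ₗ s, hs⟩,
    fun Z g k hgk => (h.2.2 Z (g ∘ₗ e.symm) k ?_).imp (fun ⟨r, hr⟩ => ⟨e.symm ∘ₗ r, ?_⟩) id⟩
  · ext x
    simpa using congrArg e (LinearMap.congr_fun hr (e.symm x))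
  · ext x
    simpa using LinearMap.congr_fun hgk (e.symm x)
  · ext x
    simpa using congrArg e.symm (LinearMap.congr_fun hr (e x))

theorem IsIrred.equiv_comp {f : X.M →ₗ[R] Y.M} (h : IsIrred f) (e : Y.M ≃ₗ[R] Y'.M) :
    IsIrred (X := X) (Y := Y') (e ∘ₗ f) := by
  refine ⟨fun ⟨r, hr⟩ => h.1 ⟨r ∘ₗ e, hr⟩, fun ⟨s, hs⟩ => h.2.1 ⟨s ∘ₗ e, ?_⟩,
    fun Z g k hgk => (h.2.2 Z g (e.symm ∘ₗ k) ?_).imp id fun ⟨s, hs⟩ => ⟨s ∘ₗ e.symm, ?_⟩⟩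
  · ext x
    simpa using congrArg e.symm (LinearMap.congr_fun hs (e x))
  · ext x
    simpa using congrArg e.symm (LinearMap.congr_fun hgk x)
  · ext x
    simpa using congrArg e (LinearMap.congr_fun hs (e.symm x))

theorem ARArrow.exists_isIrred_rep {x y : ARVertex R} (h : ARArrow x y) :
    ∃ f : x.rep.1.M →ₗ[R] y.rep.1.M, IsIrred f := by
  obtain ⟨X, Y, f, hf, hx, hy⟩ := h
  obtain ⟨a⟩ := ARVertex.mk_eq_mk_iff.1 (hx.trans x.mk_rep.symm)
  obtain ⟨b⟩ := ARVertex.mk_eq_mk_iff.1 (hy.trans y.mk_rep.symm)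
  exact ⟨_, (hf.equiv_comp b).comp_equiv a.symm⟩

section MonicEpic

variable (S : ModA R → Prop) {M N P : Type u} [AddCommGroup M] [Module R M] [AddCommGroup N]
  [Module R N] [AddCommGroup P] [Module R P]

/-- `k` can be cancelled on the left after maps from `S`. -/
def MonicOn (k : M →ₗ[R] N) : Prop :=
  ∀ X : ModA R, S X → ∀ t : X.M →ₗ[R] M, k ∘ₗ t = 0 → t = 0

/-- `k` can be cancelled on the right before maps to torsion-free modules. -/
def EpicOn (k : M →ₗ[R] N) : Prop :=
  ∀ (F : Type u) [AddCommGroup F] [Module R F], TorsionFree S F →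
    ∀ t : N →ₗ[R] F, t ∘ₗ k = 0 → t = 0

variable {S}

theorem MonicOn.comp {k : M →ₗ[R] N} {l : N →ₗ[R] P} (hl : MonicOn S l) (hk : MonicOn S k) :
    MonicOn S (l ∘ₗ k) := fun X hX t ht => hk X hX t (hl X hX (k ∘ₗ t) ht)

theorem EpicOn.comp {k : M →ₗ[R] N} {l : N →ₗ[R] P} (hl : EpicOn S l) (hk : EpicOn S k) :
    EpicOn S (l ∘ₗ k) := fun F _ _ hF t ht => hl F hF t (hk F hF (t ∘ₗ l) ht)

theorem MonicOn.pow {k : Module.End R M} (hk : MonicOn S k) (n : ℕ) : MonicOn S (k ^ n) := by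
  induction n with
  | zero => exact fun _ _ _ ht => ht
  | succ n ih => exact ih.comp hk

theorem EpicOn.pow {k : Module.End R M} (hk : EpicOn S k) (n : ℕ) : EpicOn S (k ^ n) := by
  induction n with
  | zero => exact fun _ _ _ _ _ ht => ht
  | succ n ih => exact ih.comp hk

theorem MonicOn.bijective {k : Module.End R X.M} (hX : X.IsIndec) (hSX : S X)
    (hk : MonicOn S k) : Function.Bijective k := by
  by_contra hb
  obtain ⟨n, hn⟩ := hX.exists_pow_eq_zero hb
  have := hX.1
  exact one_ne_zero (hk.pow n X hSX (1 : Module.End R X.M) (by rw [hn, LinearMap.zero_comp]))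

theorem EpicOn.bijective {k : Module.End R X.M} (hX : X.IsIndec) (hSX : TorsionFree S X.M)
    (hk : EpicOn S k) : Function.Bijective k := by
  by_contra hb
  obtain ⟨n, hn⟩ := hX.exists_pow_eq_zero hb
  have := hX.1
  exact one_ne_zero (hk.pow n X.M hSX (1 : Module.End R X.M) (by rw [hn, LinearMap.comp_zero]))

end MonicEpic

variable (S : ModA R → Prop)

/-- `Z` is relatively projective and a quotient of a torsion-free module. -/
def ProjQuotient (Z : ModA R) : Prop :=
  RelProjective S Z.M ∧ ∃ (Y : ModA R) (φ : Y.M →ₗ[R] Z.M), TorsionFree S Y.M ∧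
    Function.Surjective φ

/-- `Y` is relatively injective and a submodule of a torsion module. -/
def InjSub (Y : ModA R) : Prop :=
  RelInjective S Y.M ∧ ∃ (Z : ModA R) (ψ : Y.M →ₗ[R] Z.M), Torsion S Z.M ∧
    Function.Injective ψ

variable {S} {Z : ModA R}

theorem IsIrred.projQuotient (hS : SuccClosed S) [Nontrivial Y.M] {f : Y.M →ₗ[R] Z.M}
    (hf : IsIrred f) (hsurj : Function.Surjective f) (hY : TorsionFree S Y.M) (hZ : S Z) :
    ProjQuotient S Z := by
  refine ⟨.of_split fun E _ _ _ _ K _ _ k p hp hkp hK => ?_, Y, f, hY, hsurj⟩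
  obtain ⟨q, hq⟩ := hY.relProjective hS E K Z.M k p hp hkp hK f
  refine (hf.2.2 (ModA.of E) q p hq).resolve_left fun ⟨r, hr⟩ => ?_
  have hr0 : r = 0 := Torsion.of_exact hp hkp hK (.of_mem hZ) Y.M hY r
  exact zero_ne_one (α := Module.End R Y.M) (by rwa [hr0, LinearMap.zero_comp] at hr)

theorem IsIrred.injSub (hS : SuccClosed S) [Nontrivial Z.M] {f : Y.M →ₗ[R] Z.M}
    (hf : IsIrred f) (hinj : Function.Injective f) (hY : TorsionFree S Y.M) (hZ : S Z) :
    InjSub S Y := by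
  refine ⟨.of_split fun E _ _ _ _ Q _ _ i c hi hic hQ => ?_, Z, f, .of_mem hZ, hinj⟩
  obtain ⟨q, hq⟩ := (Torsion.of_mem hZ).relInjective hS E Y.M Q i c hi hic hQ f
  refine (hf.2.2 (ModA.of E) i q hq).resolve_right fun ⟨s, hs⟩ => ?_
  have hs0 : s = 0 := TorsionFree.of_exact hi hic hY hQ Z hZ s
  exact zero_ne_one (α := Module.End R Z.M) (by rwa [hs0, LinearMap.comp_zero] at hs)

theorem IsIrred.monicOn {g : Y.M →ₗ[R] Z.M} (hg : IsIrred g) (hZ : RelProjective S Z.M) :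
    MonicOn S g := by
  intro X hX t ht
  let V := LinearMap.range t
  let g' : Y.M ⧸ V →ₗ[R] Z.M := V.liftQ g (by
    rintro _ ⟨a, rfl⟩
    exact LinearMap.congr_fun ht a)
  have hgs : ¬SplitEpiMap (X := ModA.of (Y.M ⧸ V)) (Y := Z) g' := by
    rintro ⟨s, hs⟩
    obtain ⟨s', rfl⟩ := hZ Y.M X.M (Y.M ⧸ V) t V.mkQ V.mkQ_surjective
      (LinearMap.exact_map_mkQ_range t) (.of_mem hX) s
    exact hg.2.1 ⟨s', hs⟩
  obtain ⟨r, hr⟩ := (hg.2.2 (ModA.of (Y.M ⧸ V)) V.mkQ g' rfl).resolve_right hgs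
  calc t = (r ∘ₗ V.mkQ) ∘ₗ t := (congrArg (· ∘ₗ t) hr).symm
    _ = r ∘ₗ 0 := congrArg (r ∘ₗ ·) (LinearMap.range_mkQ_comp t)
    _ = 0 := LinearMap.comp_zero r

theorem IsIrred.epicOn {g : Y.M →ₗ[R] Z.M} (hg : IsIrred g) (hY : RelInjective S Y.M) :
    EpicOn S g := by
  intro F _ _ hF t ht
  let V := LinearMap.ker t
  let g' : Y.M →ₗ[R] V := g.codRestrict V (LinearMap.congr_fun ht)
  have hgs : ¬SplitMonoMap (X := Y) (Y := ModA.of V) g' := by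
    rintro ⟨r, hr⟩
    obtain ⟨r', rfl⟩ := hY Z.M V F V.subtype t V.injective_subtype
      (LinearMap.exact_subtype_ker_map t) hF r
    exact hg.1 ⟨r', hr⟩
  obtain ⟨s, hs⟩ := (hg.2.2 (ModA.of V) g' V.subtype rfl).resolve_left hgs
  calc t = t ∘ₗ V.subtype ∘ₗ s := (congrArg (t ∘ₗ ·) hs).symm
    _ = 0 ∘ₗ s := congrArg (· ∘ₗ s) (LinearMap.comp_ker_subtype t)
    _ = 0 := LinearMap.zero_comp s

/-- The torsion-free module onto `Y` is the pullback of the one onto `Z`. -/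
theorem ProjQuotient.of_monicOn (hS : SuccClosed S) {g : Y.M →ₗ[R] Z.M} (hZ : ProjQuotient S Z)
    (hg : MonicOn S g) : ProjQuotient S Y := by
  obtain ⟨hZ, W, φ, hW, hφ⟩ := hZ
  let d : Y.M × W.M →ₗ[R] Z.M := g ∘ₗ .fst R Y.M W.M - φ ∘ₗ .snd R Y.M W.M
  let P := LinearMap.ker d
  have hd (t : P) : g t.1.1 = φ t.1.2 := sub_eq_zero.1 t.2
  have hsurj : Function.Surjective (LinearMap.fst R Y.M W.M ∘ₗ P.subtype) := fun y =>
    (hφ (g y)).elim fun w hw => ⟨⟨(y, w), sub_eq_zero.2 hw.symm⟩, rfl⟩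
  have hP : TorsionFree S P := by
    intro X hX t
    have hsnd : LinearMap.snd R Y.M W.M ∘ₗ P.subtype ∘ₗ t = 0 := hW X hX _
    have hfst : LinearMap.fst R Y.M W.M ∘ₗ P.subtype ∘ₗ t = 0 := hg X hX _ <| by
      ext x
      exact (hd (t x)).trans ((congrArg φ (LinearMap.congr_fun hsnd x)).trans (map_zero φ))
    ext x
    · exact LinearMap.congr_fun hfst x
    · exact LinearMap.congr_fun hsnd x
  have hprod : RelProjective S (Y.M × W.M) :=
    (hP.relProjective hS).of_exact P.injective_subtype
      (fun z => (hφ (-z)).elim fun w hw => ⟨(0, w), by simp [d, hw]⟩)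
      (LinearMap.exact_subtype_ker_map d) hZ
  exact ⟨hprod.of_retract (LinearMap.fst_comp_inl ..), ModA.of P, _, hP, hsurj⟩

/-- The torsion module containing `Z` is the pushout of the one containing `Y`. -/
theorem InjSub.of_epicOn (hS : SuccClosed S) {g : Y.M →ₗ[R] Z.M} (hY : InjSub S Y)
    (hg : EpicOn S g) : InjSub S Z := by
  obtain ⟨hY, W, ψ, hW, hψ⟩ := hY
  let d : Y.M →ₗ[R] Z.M × W.M := g.prod ψ
  let Q := (Z.M × W.M) ⧸ LinearMap.range d
  let π : Z.M × W.M →ₗ[R] Q := (LinearMap.range d).mkQ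
  have hd : π ∘ₗ .inl R Z.M W.M ∘ₗ g = -(π ∘ₗ .inr R Z.M W.M ∘ₗ ψ) := by
    rw [eq_neg_iff_add_eq_zero, ← LinearMap.comp_add]
    ext y
    exact (Submodule.Quotient.mk_eq_zero _).2 ⟨y, by simp [d]⟩
  have hinj : Function.Injective (π ∘ₗ .inl R Z.M W.M) := by
    rw [injective_iff_map_eq_zero]
    intro z hz
    obtain ⟨y, hy⟩ := (Submodule.Quotient.mk_eq_zero _).1 hz
    obtain ⟨rfl, hyw⟩ := Prod.mk.inj hy
    rw [(map_eq_zero_iff ψ hψ).1 hyw, map_zero]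
  have hQ : Torsion S Q := by
    intro F _ _ hF t
    have hinr : (t ∘ₗ π) ∘ₗ .inr R Z.M W.M = 0 := hW F hF _
    have hinl : (t ∘ₗ π) ∘ₗ .inl R Z.M W.M = 0 := hg F hF _ <| by
      calc ((t ∘ₗ π) ∘ₗ .inl R Z.M W.M) ∘ₗ g = t ∘ₗ (-(π ∘ₗ .inr R Z.M W.M ∘ₗ ψ)) :=
            congrArg (t ∘ₗ ·) hd
        _ = -(((t ∘ₗ π) ∘ₗ .inr R Z.M W.M) ∘ₗ ψ) := LinearMap.comp_neg _ _
        _ = 0 := by rw [hinr, LinearMap.zero_comp, neg_zero]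
    exact Submodule.linearMap_qext _ (LinearMap.prod_ext hinl hinr)
  have hprod : RelInjective S (Z.M × W.M) :=
    hY.of_exact (a := d) (fun _ _ h => hψ (congrArg Prod.snd h)) (Submodule.mkQ_surjective _)
      (LinearMap.exact_map_mkQ_range d) (hQ.relInjective hS)
  exact ⟨hprod.of_retract (LinearMap.fst_comp_inl ..), ModA.of Q, _, hQ, hinj⟩

theorem ProjQuotient.of_transGen_arArrow (hS : SuccClosed S) {x z : ARVertex R}
    (hz : ProjQuotient S z.rep.1) (h : TransGen ARArrow x z) :
    ProjQuotient S x.rep.1 ∧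
      ∃ k : x.rep.1.M →ₗ[R] z.rep.1.M, MonicOn S k ∧ ¬Function.Bijective k := by
  induction h using TransGen.head_induction_on with
  | single hxz =>
    obtain ⟨g, hg⟩ := hxz.exists_isIrred_rep
    have hmono := hg.monicOn hz.1
    exact ⟨hz.of_monicOn hS hmono, g, hmono, hg.not_bijective⟩
  | @head x y hxy _ ih =>
    obtain ⟨hy, k, hk, -⟩ := ih
    obtain ⟨g, hg⟩ := hxy.exists_isIrred_rep
    have hmono := hg.monicOn hy.1
    have := x.rep.2.1
    exact ⟨hy.of_monicOn hS hmono, k ∘ₗ g, hk.comp hmono, fun hb => hg.not_bijective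
      ((splitMonoMap_of_bijective (X := x.rep.1) hb).of_comp.bijective y.rep.2)⟩

theorem InjSub.of_transGen_arArrow (hS : SuccClosed S) {y x : ARVertex R}
    (hy : InjSub S y.rep.1) (h : TransGen ARArrow y x) :
    InjSub S x.rep.1 ∧
      ∃ k : y.rep.1.M →ₗ[R] x.rep.1.M, EpicOn S k ∧ ¬Function.Bijective k := by
  induction h with
  | single hyx =>
    obtain ⟨g, hg⟩ := hyx.exists_isIrred_rep
    have hepi := hg.epicOn hy.1
    exact ⟨hy.of_epicOn hS hepi, g, hepi, hg.not_bijective⟩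
  | @tail z x _ hzx ih =>
    obtain ⟨hz, k, hk, -⟩ := ih
    obtain ⟨g, hg⟩ := hzx.exists_isIrred_rep
    have hepi := hg.epicOn hz.1
    have := x.rep.2.1
    exact ⟨hz.of_epicOn hS hepi, g ∘ₗ k, hepi.comp hk, fun hb => hg.not_bijective
      ((splitEpiMap_of_bijective (Y := x.rep.1) hb).of_comp.bijective z.rep.2)⟩

end Irreducible

/-! ### Cycle-finite cyclic components -/

section Component

variable {R : Type u} [Ring R]

/-- `X` is an indecomposable module reached from `z` along nonzero nonisomorphisms. -/
def IsSuccessor (z : ARVertex R) (X : ModA R) : Prop :=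
  ∃ hX : X.IsIndec, ReflTransGen HomArrow z (ARVertex.mk ⟨X, hX⟩)

theorem isSuccessor_rep_iff {z x : ARVertex R} :
    IsSuccessor z x.rep.1 ↔ ReflTransGen HomArrow z x := by
  conv_rhs => rw [← x.mk_rep]
  exact ⟨fun ⟨_, h⟩ => h, fun h => ⟨x.rep.2, h⟩⟩

theorem succClosed_isSuccessor (z : ARVertex R) : SuccClosed (IsSuccessor z) :=
  fun X Y ⟨hX, hzX⟩ hY _ hf =>
    ⟨hY, hzX.trans (reflTransGen_homArrow_of_ne_zero (X := ⟨X, hX⟩) (Y := ⟨Y, hY⟩) hf)⟩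

/-- If `y` were not a successor of `z`, the cycle through `z` (when the arrow `y → z` is surjective)
or the one through `y` (when it is injective) would compose to a nonisomorphism cancellable on
modules that include its own domain, although it is nilpotent. -/
theorem ARArrow.reflTransGen_homArrow_of_onARCycle {y z : ARVertex R} (h : ARArrow y z)
    (hy : OnARCycle y) (hz : OnARCycle z) : ReflTransGen HomArrow z y := by
  by_contra hzy
  have hS := succClosed_isSuccessor z
  have hzS : IsSuccessor z z.rep.1 := isSuccessor_rep_iff.2 .refl
  have hyF : TorsionFree (IsSuccessor z) y.rep.1.M :=
    .of_not_mem hS y.rep.2 (mt isSuccessor_rep_iff.1 hzy)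
  have := y.rep.2.1
  have := z.rep.2.1
  obtain ⟨f, hf⟩ := h.exists_isIrred_rep
  rcases hf.injective_or_surjective with hinj | hsurj
  · obtain ⟨-, k, hk, hkb⟩ := (hf.injSub hS hinj hyF hzS).of_transGen_arArrow hS hy
    exact hkb (hk.bijective y.rep.2 hyF)
  · obtain ⟨-, k, hk, hkb⟩ := (hf.projQuotient hS hsurj hyF hzS).of_transGen_arArrow hS hz
    exact hkb (hk.bijective z.rep.2 hzS)

theorem ARStep.reflTransGen_homArrow {x y : ARVertex R} (h : ARStep x y) (hx : OnARCycle x)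
    (hy : OnARCycle y) : ReflTransGen HomArrow x y :=
  h.elim (fun h => .single h.homArrow) fun h => h.reflTransGen_homArrow_of_onARCycle hy hx

variable {Γ : Set (ARVertex R)}

theorem IsCyclicComponent.reflTransGen_homArrow (hΓ : IsCyclicComponent Γ) {x y : ARVertex R}
    (hx : x ∈ Γ) (hy : y ∈ Γ) : ReflTransGen HomArrow x y :=
  (hΓ.2.2.2 x hx y hy).trans_induction_on (fun _ => .refl)
    (fun h => h.2.2.reflTransGen_homArrow h.1 h.2.1) fun _ _ => .trans

theorem IsCyclicComponent.mem_of_reflTransGen_arArrow (hΓ : IsCyclicComponent Γ)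
    {v x : ARVertex R} (hv : v ∈ Γ) (hvx : ReflTransGen ARArrow v x)
    (hxv : ReflTransGen ARArrow x v) : x ∈ Γ := by
  induction hvx with
  | refl => exact hv
  | tail hvy hyx ih =>
    exact hΓ.2.2.1 _ (ih (.head hyx hxv)) _ (.tail' (hxv.trans hvy) hyx) (.inl hyx)

theorem IsCycleFiniteCyclicComponent.mem_of_reflTransGen_homArrow
    (hΓ : IsCycleFiniteCyclicComponent Γ) {x w y : ARVertex R} (hx : x ∈ Γ) (hy : y ∈ Γ)
    (hxw : ReflTransGen HomArrow x w) (hwy : ReflTransGen HomArrow w y) : w ∈ Γ := by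
  obtain ⟨hΓ, v, hv, hcf⟩ := hΓ
  obtain ⟨hvw, hwv⟩ := hcf.reflTransGen_arArrow ((hΓ.reflTransGen_homArrow hv hx).trans hxw)
    (hwy.trans (hΓ.reflTransGen_homArrow hy hv))
  exact hΓ.mem_of_reflTransGen_arArrow hv hvw hwv

end Component

/-! ### Primitive idempotents and the radical -/

section PrimitiveIdempotents

variable {A : Type u} [Ring A]

theorem mem_span_singleton_iff_mul_eq {e x : A} (he : IsIdempotentElem e) :
    x ∈ Submodule.span Aᵐᵒᵖ {e} ↔ e * x = x := by
  rw [Submodule.mem_span_singleton]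
  constructor
  · rintro ⟨a, rfl⟩
    rw [mul_smul_comm, he.eq]
  · exact fun h => ⟨.op x, h⟩

theorem IsPrimitiveIdempotent.eq_zero_or_eq {e f : A} (he : IsPrimitiveIdempotent A e)
    (hf : IsIdempotentElem f) (hef : e * f = f) (hfe : f * e = f) : f = 0 ∨ f = e := by
  have hsub : IsIdempotentElem (e - f) := hf.sub he.1 hfe hef
  refine (he.2.2 f (e - f) hf hsub ?_ ?_ (add_sub_cancel f e).symm).imp_right fun h =>
    (sub_eq_zero.1 h).symm
  · rw [mul_sub, hfe, hf.eq, sub_self]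
  · rw [sub_mul, hef, hf.eq, sub_self]

theorem IsPrimitiveIdempotent.isIndecMod_span {e : A} (he : IsPrimitiveIdempotent A e) :
    IsIndecMod Aᵐᵒᵖ (Submodule.span Aᵐᵒᵖ {e}) := by
  have mem_iff {x : A} := mem_span_singleton_iff_mul_eq (x := x) he.1
  let e' : Submodule.span Aᵐᵒᵖ {e} := ⟨e, Submodule.mem_span_singleton_self e⟩
  refine ⟨⟨e', 0, fun h => he.2.1 (congrArg Subtype.val h)⟩, fun θ hθ => ?_⟩
  have hθ_apply (x : Submodule.span Aᵐᵒᵖ {e}) : (θ x : A) = θ e' * x := by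
    have hx : x = MulOpposite.op (x : A) • e' := Subtype.ext (mem_iff.1 x.2).symm
    conv_lhs => rw [hx, map_smul]
    rfl
  have hidem : IsIdempotentElem (θ e' : A) := by
    rw [IsIdempotentElem, ← hθ_apply]
    exact congrArg Subtype.val (LinearMap.congr_fun hθ e')
  refine (he.eq_zero_or_eq hidem (mem_iff.1 (θ e').2) (hθ_apply e').symm).imp ?_ ?_ <;>
    refine fun h => LinearMap.ext fun x => Subtype.ext ?_
  · rw [hθ_apply, h, zero_mul]; rfl
  · rw [hθ_apply, h]; exact mem_iff.1 x.2

theorem jacobsonRad_mul_mem_right {x : A} (hx : x ∈ jacobsonRad A) (a : A) :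
    x * a ∈ jacobsonRad A := by
  have : (jacobsonRad A).IsTwoSided := by unfold jacobsonRad; infer_instance
  exact Ideal.mul_mem_right a _ hx

theorem jacobsonRadSq_eq_mul (A : Type u) [Ring A] :
    jacobsonRadSq A = jacobsonRad A * jacobsonRad A := by
  refine le_antisymm (Ideal.span_le.2 ?_) (Ideal.mul_le.2 fun a ha b hb => ?_)
  · rintro _ ⟨a, ha, b, hb, rfl⟩
    exact Ideal.mul_mem_mul ha hb
  · exact Ideal.subset_span ⟨a, ha, b, hb, rfl⟩

theorem jacobsonRadSq_mul_mem_right {x : A} (hx : x ∈ jacobsonRadSq A) (a : A) :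
    x * a ∈ jacobsonRadSq A := by
  have : (jacobsonRad A).IsTwoSided := by unfold jacobsonRad; infer_instance
  rw [jacobsonRadSq_eq_mul] at hx ⊢
  exact Ideal.mul_mem_right a _ hx

theorem isNilpotent_of_mem_jacobsonRad [IsArtinianRing A] {x : A} (hx : x ∈ jacobsonRad A) :
    IsNilpotent x := by
  obtain ⟨n, hn⟩ := IsArtinianRing.isNilpotent_jacobson_bot (R := A)
  have hxn : x ^ n ∈ jacobsonRad A ^ n := Ideal.pow_mem_pow hx n
  rw [jacobsonRad, hn] at hxn
  exact ⟨n, hxn⟩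

theorem exists_not_isNilpotent_mul {x : A} (hx : x ∉ jacobsonRad A) :
    ∃ y, ¬IsNilpotent (y * x) := by
  by_contra! hnil
  refine hx (Ideal.mem_jacobson_iff.2 fun y => ?_)
  obtain ⟨z, hz⟩ := (hnil (-y)).isUnit_one_sub.exists_left_inv
  refine ⟨z, ?_⟩
  rw [show z * y * x + z - 1 = z * (1 - -y * x) - 1 by noncomm_ring, hz, sub_self]
  exact zero_mem _

theorem IsPrimitiveIdempotent.notMem_jacobsonRad [IsArtinianRing A] {e : A}
    (he : IsPrimitiveIdempotent A e) : e ∉ jacobsonRad A := by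
  intro h
  obtain ⟨n, hn⟩ := isNilpotent_of_mem_jacobsonRad h
  exact he.2.1 (by rw [← he.1.pow_succ_eq n, pow_succ, hn, zero_mul])

section Local

variable [IsNoetherian Aᵐᵒᵖ A] [IsArtinian Aᵐᵒᵖ A]

theorem IsPrimitiveIdempotent.exists_mul_eq_of_not_isNilpotent {e t : A}
    (he : IsPrimitiveIdempotent A e) (het : e * t = t) (ht : ¬IsNilpotent t) :
    ∃ s, t * s = e := by
  let θ : Module.End Aᵐᵒᵖ (Submodule.span Aᵐᵒᵖ {e}) :=
    (LinearMap.mulLeft Aᵐᵒᵖ t).restrict fun x _ =>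
      (mem_span_singleton_iff_mul_eq he.1).2 (by rw [LinearMap.mulLeft_apply, ← mul_assoc, het])
  let e' : Submodule.span Aᵐᵒᵖ {e} := ⟨e, Submodule.mem_span_singleton_self e⟩
  have hθ : Function.Bijective θ := by
    by_contra hθ
    obtain ⟨n, hn⟩ := he.isIndecMod_span.exists_pow_eq_zero hθ
    have hpow : t ^ n * e = 0 := by
      have h := congrArg Subtype.val (LinearMap.congr_fun hn e')
      rw [Module.End.pow_restrict] at h
      rw [← LinearMap.mulLeft_apply Aᵐᵒᵖ, ← LinearMap.pow_mulLeft]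
      exact h
    exact ht ⟨n + 1, by rw [pow_succ, ← congrArg (t ^ n * ·) het, ← mul_assoc, hpow, zero_mul]⟩
  obtain ⟨s, hs⟩ := hθ.2 e'
  exact ⟨s, congrArg Subtype.val hs⟩

theorem IsPrimitiveIdempotent.exists_mul_eq {e x : A} (he : IsPrimitiveIdempotent A e)
    (hex : e * x = x) (hx : x ∉ jacobsonRad A) : ∃ c, x * c = e := by
  obtain ⟨y, hy⟩ := exists_not_isNilpotent_mul hx
  obtain ⟨s, hs⟩ := he.exists_mul_eq_of_not_isNilpotent (t := x * y)
    (by rw [← mul_assoc, hex]) fun ⟨n, hn⟩ =>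
      hy ⟨n + 1, by rw [pow_succ, ← mul_assoc, mul_pow_mul, hn, mul_zero, zero_mul]⟩
  exact ⟨y * s, by rw [← mul_assoc, hs]⟩

theorem IsPrimitiveIdempotent.exists_inverse {e f x : A} (he : IsPrimitiveIdempotent A e)
    (hf : IsPrimitiveIdempotent A f) (hex : e * x = x) (hxf : x * f = x)
    (hx : x ∉ jacobsonRad A) : ∃ w, f * w = w ∧ w * e = w ∧ x * w = e ∧ w * x = f := by
  obtain ⟨c, hc⟩ := he.exists_mul_eq hex hx
  have hxw : x * (f * c * e) = e := by simp only [← mul_assoc, hxf, hc, he.1.eq]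
  have hfw : f * (f * c * e) = f * c * e := by simp only [← mul_assoc, hf.1.eq]
  refine ⟨f * c * e, hfw, by rw [mul_assoc, he.1.eq], hxw, ?_⟩
  refine (hf.eq_zero_or_eq ?_ ?_ (by rw [mul_assoc, hxf])).resolve_left fun h => hx ?_
  · rw [IsIdempotentElem, mul_assoc, ← mul_assoc x, hxw, hex]
  · rw [← mul_assoc, hfw]
  · rw [← hex, ← hxw, mul_assoc, h, mul_zero]
    exact zero_mem _

theorem IsBasicAlgebra.mul_mul_mem_jacobsonRad (hb : IsBasicAlgebra A) {e f : A}
    (he : IsPrimitiveIdempotent A e) (hf : IsPrimitiveIdempotent A f) (hef : e * f = 0)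
    (hfe : f * e = 0) (a : A) : e * a * f ∈ jacobsonRad A := by
  by_contra hx
  have hex : e * (e * a * f) = e * a * f := by simp only [← mul_assoc, he.1.eq]
  obtain ⟨w, hfw, -, hxw, hwx⟩ := he.exists_inverse hf hex (by rw [mul_assoc, hf.1.eq]) hx
  have mem_span_of_mul_eq {g t : A} (hg : IsIdempotentElem g) (ht : g * t = t) (x : A) :
      LinearMap.mulLeft Aᵐᵒᵖ t x ∈ Submodule.span Aᵐᵒᵖ {g} :=
    (mem_span_singleton_iff_mul_eq hg).2 (by rw [LinearMap.mulLeft_apply, ← mul_assoc, ht])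
  refine hb ⟨e, f, he, hf, hef, hfe, ⟨LinearEquiv.ofLinearMap
    ((LinearMap.mulLeft Aᵐᵒᵖ w).restrict fun x _ => mem_span_of_mul_eq hf.1 hfw x)
    ((LinearMap.mulLeft Aᵐᵒᵖ (e * a * f)).restrict fun x _ => mem_span_of_mul_eq he.1 hex x)
    (LinearMap.ext fun x => Subtype.ext ?_) (LinearMap.ext fun x => Subtype.ext ?_)⟩⟩
  · change w * (e * a * f * x) = x
    rw [← mul_assoc, hwx, (mem_span_singleton_iff_mul_eq hf.1).1 x.2]
  · change e * a * f * (w * x) = x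
    rw [← mul_assoc, hxw, (mem_span_singleton_iff_mul_eq he.1).1 x.2]

end Local

section Decomposition

variable {e f : A}

/-- `e` is a finite sum of pairwise orthogonal primitive idempotents. -/
def HasPrimitiveDecomp (e : A) : Prop :=
  ∃ (I : Type) (_ : Fintype I) (F : I → A), (∀ i, IsPrimitiveIdempotent A (F i)) ∧
    OrthogonalIdempotents F ∧ ∑ i, F i = e

theorem orthogonalIdempotents_sumElim {I J : Type} [Fintype I] [Fintype J] {F : I → A} {G : J → A}
    (hF : OrthogonalIdempotents F) (hG : OrthogonalIdempotents G)
    (hFG : (∑ i, F i) * ∑ j, G j = 0) (hGF : (∑ j, G j) * ∑ i, F i = 0) :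
    OrthogonalIdempotents (Sum.elim F G) := by
  have mul_eq_zero {I J : Type} [Fintype I] [Fintype J] {F : I → A} {G : J → A}
      (hF : OrthogonalIdempotents F) (hG : OrthogonalIdempotents G)
      (h : (∑ i, F i) * ∑ j, G j = 0) (i : I) (j : J) : F i * G j = 0 := by
    have hi : F i * ∑ i, F i = F i := hF.mul_sum_of_mem (Finset.mem_univ i)
    have hj : (∑ j, G j) * G j = G j := by
      classical simp [Finset.sum_mul, hG.mul_eq]
    rw [← hi, ← hj, mul_assoc, ← mul_assoc (∑ i, F i), h, zero_mul, mul_zero]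
  refine ⟨Sum.rec hF.idem hG.idem, ?_⟩
  rintro (i | i) (j | j) hij
  · exact hF.ortho fun h => hij (congrArg Sum.inl h)
  · exact mul_eq_zero hF hG hFG i j
  · exact mul_eq_zero hG hF hGF i j
  · exact hG.ortho fun h => hij (congrArg Sum.inr h)

theorem HasPrimitiveDecomp.add (he : HasPrimitiveDecomp e) (hf : HasPrimitiveDecomp f)
    (hef : e * f = 0) (hfe : f * e = 0) : HasPrimitiveDecomp (e + f) := by
  obtain ⟨I, _, F, hF, hFo, rfl⟩ := he
  obtain ⟨J, _, G, hG, hGo, rfl⟩ := hf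
  exact ⟨I ⊕ J, inferInstance, Sum.elim F G, Sum.rec hF hG,
    orthogonalIdempotents_sumElim hFo hGo hef hfe, Fintype.sum_sum_type _⟩

theorem span_lt_span_add (he : IsIdempotentElem e) (hf : IsIdempotentElem f) (hef : e * f = 0)
    (hfe : f * e = 0) (hf0 : f ≠ 0) :
    Submodule.span Aᵐᵒᵖ {e} < Submodule.span Aᵐᵒᵖ {e + f} := by
  have hsum : IsIdempotentElem (e + f) := he.add hf (by rw [hef, hfe, add_zero])
  refine SetLike.lt_iff_le_and_exists.2 ⟨?_, f, ?_, ?_⟩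
  · rw [Submodule.span_singleton_le_iff_mem, mem_span_singleton_iff_mul_eq hsum, add_mul, he.eq,
      hfe, add_zero]
  · rw [mem_span_singleton_iff_mul_eq hsum, add_mul, hf.eq, hef, zero_add]
  · rw [mem_span_singleton_iff_mul_eq he, hef]
    exact hf0.symm

theorem hasPrimitiveDecomp [IsNoetherian Aᵐᵒᵖ A] [IsArtinian Aᵐᵒᵖ A] (he : IsIdempotentElem e) :
    HasPrimitiveDecomp e := by
  induction h : Submodule.span Aᵐᵒᵖ {e} using WellFoundedLT.induction generalizing e with
  | ind N ih =>
  subst h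
  by_cases h0 : e = 0
  · exact ⟨Empty, inferInstance, Empty.elim, nofun, ⟨nofun, nofun⟩, h0.symm⟩
  by_cases hp : IsPrimitiveIdempotent A e
  · exact ⟨Unit, inferInstance, fun _ => e, fun _ => hp, .unique.2 he, by simp⟩
  obtain ⟨f, g, hf, hg, hfg, hgf, rfl, hf0, hg0⟩ : ∃ f g : A, IsIdempotentElem f ∧
      IsIdempotentElem g ∧ f * g = 0 ∧ g * f = 0 ∧ e = f + g ∧ f ≠ 0 ∧ g ≠ 0 := by
    by_contra! hcon
    exact hp ⟨he, h0, fun f g hf hg hfg hgf hsum =>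
      or_iff_not_imp_left.2 (hcon f g hf hg hfg hgf hsum)⟩
  refine .add (ih _ (span_lt_span_add hf hg hfg hgf hg0) hf rfl) (ih _ ?_ hg rfl) hfg hgf
  rw [add_comm f g]
  exact span_lt_span_add hg hf hgf hfg hf0

theorem exists_completeIdemFamily [IsNoetherian Aᵐᵒᵖ A] [IsArtinian Aᵐᵒᵖ A]
    (he : IsIdempotentElem e) :
    ∃ (E : CompleteIdemFamily A) (S : Finset (Fin E.n)), e = ∑ i ∈ S, E.e i := by
  obtain ⟨I, _, F, hF, hFo, hFe⟩ := hasPrimitiveDecomp he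
  obtain ⟨J, _, G, hG, hGo, hGe⟩ := hasPrimitiveDecomp he.one_sub
  have horth : OrthogonalIdempotents (Sum.elim F G) := orthogonalIdempotents_sumElim hFo hGo
    (by rw [hFe, hGe, he.mul_one_sub_self]) (by rw [hFe, hGe, he.one_sub_mul_self])
  let σ := (Fintype.equivFin (I ⊕ J)).symm
  have hprim : ∀ x, IsPrimitiveIdempotent A (Sum.elim F G x) := Sum.rec hF hG
  refine ⟨⟨Fintype.card (I ⊕ J), Sum.elim F G ∘ σ, fun i => hprim (σ i),
    fun i j hij => horth.ortho (σ.injective.ne hij), ?_⟩,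
    Finset.univ.map (Function.Embedding.inl.trans σ.symm.toEmbedding), ?_⟩
  · refine (Equiv.sum_comp σ _).trans ((Fintype.sum_sum_type _).trans ?_)
    simp [hFe, hGe]
  · simp [hFe]

end Decomposition

end PrimitiveIdempotents

/-! ### Simple modules attached to primitive idempotents -/

section SimpleTop

open scoped RightActions

variable {A : Type u} [Ring A]

/-- The map `a ↦ m a` from the regular right module, for an element `m` of a right module. -/
def orbitMap {M : Type u} [AddCommGroup M] [Module Aᵐᵒᵖ M] (m : M) : A →ₗ[Aᵐᵒᵖ] M where
  toFun a := m <• a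
  map_add' a b := by rw [MulOpposite.op_add, add_smul]
  map_smul' a b := op_smul_mul m b a.unop

/-- The right ideal of those `x` with `e x ∈ rad A`; for a primitive idempotent `e` it is the
kernel of the map `x ↦ e x` from `A` onto the simple top of `eA`. -/
def topKernel (e : A) : Submodule Aᵐᵒᵖ A where
  carrier := {x | e * x ∈ jacobsonRad A}
  add_mem' {x y} hx hy := by
    rw [Set.mem_ofPred_eq, mul_add]
    exact add_mem hx hy
  zero_mem' := by
    rw [Set.mem_ofPred_eq, mul_zero]
    exact zero_mem _
  smul_mem' a x hx := by
    rw [Set.mem_ofPred_eq, mul_smul_comm]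
    exact jacobsonRad_mul_mem_right hx a.unop

theorem mem_topKernel {e x : A} : x ∈ topKernel e ↔ e * x ∈ jacobsonRad A :=
  Iff.rfl

theorem mkQ_op_smul_self {e : A} (he : IsIdempotentElem e) (N : Submodule Aᵐᵒᵖ A) :
    N.mkQ e <• e = N.mkQ e := by
  rw [← map_smul, op_smul_eq_mul, he.eq]

section

variable [IsArtinianRing A]

theorem eq_zero_of_op_smul_eq {M : Type u} [AddCommGroup M] [Module Aᵐᵒᵖ M] {m : M} {a : A}
    (ha : a ∈ jacobsonRad A) (hma : m <• a = m) : m = 0 := by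
  obtain ⟨n, hn⟩ := isNilpotent_of_mem_jacobsonRad ha
  have hpow (k : ℕ) : m <• a ^ k = m := by
    induction k with
    | zero => rw [pow_zero, MulOpposite.op_one, one_smul]
    | succ k ih => rw [pow_succ, op_smul_mul, ih, hma]
  rw [← hpow n, hn, MulOpposite.op_zero, zero_smul]

theorem IsPrimitiveIdempotent.notMem_topKernel {e : A} (he : IsPrimitiveIdempotent A e) :
    e ∉ topKernel e := by
  rw [mem_topKernel, he.1.eq]
  exact he.notMem_jacobsonRad

theorem IsPrimitiveIdempotent.mkQ_topKernel_ne_zero {e : A} (he : IsPrimitiveIdempotent A e) :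
    (topKernel e).mkQ e ≠ 0 :=
  fun h => he.notMem_topKernel ((Submodule.Quotient.mk_eq_zero _).1 h)

theorem IsPrimitiveIdempotent.exists_op_smul_ne_zero_of_isCompFactorMod {e : A}
    (he : IsPrimitiveIdempotent A e) {M : Type u} [AddCommGroup M] [Module Aᵐᵒᵖ M]
    (h : IsCompFactorMod Aᵐᵒᵖ (A ⧸ topKernel e) M) : ∃ m : M, m <• e ≠ 0 := by
  obtain ⟨N', N, -, ⟨φ⟩⟩ := h
  obtain ⟨x, hx⟩ := φ.surjective ((topKernel e).mkQ e)
  obtain ⟨n, rfl⟩ := (N'.comap N.subtype).mkQ_surjective x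
  refine ⟨n, fun hn => he.mkQ_topKernel_ne_zero ?_⟩
  have hne : n <• e = 0 := Subtype.ext hn
  calc (topKernel e).mkQ e
      = (topKernel e).mkQ e <• e := (mkQ_op_smul_self he.1 _).symm
    _ = φ ((N'.comap N.subtype).mkQ (n <• e)) := by rw [← hx, map_smul, map_smul]
    _ = 0 := by rw [hne, map_zero, map_zero]

end

namespace IsPrimitiveIdempotent

variable [IsNoetherian Aᵐᵒᵖ A] [IsArtinian Aᵐᵒᵖ A] [IsArtinianRing A] {e : A}

theorem isIndecMod_of_generator (he : IsPrimitiveIdempotent A e) {M : Type u} [AddCommGroup M]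
    [Module Aᵐᵒᵖ M] [Nontrivial M] {m : M} (hm : m <• e = m) (hgen : ∀ x, ∃ a : A, m <• a = x) :
    IsIndecMod Aᵐᵒᵖ M := by
  refine ⟨‹_›, fun θ hθ => ?_⟩
  have hθθ (x : M) : θ (θ x) = θ x := LinearMap.congr_fun hθ x
  obtain ⟨x, hx⟩ := hgen (θ m)
  have hθm : m <• (e * x * e) = θ m := by
    rw [op_smul_mul, op_smul_mul, hm, hx, ← map_smul, hm]
  by_cases hJ : e * x * e ∈ jacobsonRad A
  · left
    have h0 : θ m = 0 := eq_zero_of_op_smul_eq hJ (by rw [← map_smul, hθm, hθθ])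
    refine LinearMap.ext fun z => ?_
    obtain ⟨a, rfl⟩ := hgen z
    rw [map_smul, h0, smul_zero, LinearMap.zero_apply]
  · right
    obtain ⟨c, hc⟩ := he.exists_mul_eq (by simp only [← mul_assoc, he.1.eq]) hJ
    have hmc : m = θ (m <• c) := by rw [map_smul, ← hθm, ← op_smul_mul, hc, hm]
    have h1 : θ m = m := by rw [hmc, hθθ]
    refine LinearMap.ext fun z => ?_
    obtain ⟨a, rfl⟩ := hgen z
    rw [map_smul, h1, Module.End.one_apply]

theorem isIndecMod_quotient (he : IsPrimitiveIdempotent A e) {N : Submodule Aᵐᵒᵖ A}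
    (heN : e ∉ N) (hN : ∀ x, e * x = 0 → x ∈ N) : IsIndecMod Aᵐᵒᵖ (A ⧸ N) := by
  have : Nontrivial (A ⧸ N) :=
    Submodule.Quotient.nontrivial_iff.2 fun h => heN (h ▸ Submodule.mem_top)
  refine he.isIndecMod_of_generator (m := N.mkQ e) (mkQ_op_smul_self he.1 N) fun x => ?_
  obtain ⟨x, rfl⟩ := N.mkQ_surjective x
  refine ⟨x, ?_⟩
  rw [← map_smul, op_smul_eq_mul, Submodule.mkQ_apply, Submodule.mkQ_apply,
    Submodule.Quotient.eq]
  exact hN _ (by rw [mul_sub, ← mul_assoc, he.1.eq, sub_self])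

theorem isCoatom_topKernel (he : IsPrimitiveIdempotent A e) : IsCoatom (topKernel e) := by
  refine ⟨fun h => he.notMem_topKernel (h ▸ Submodule.mem_top), fun N hN => ?_⟩
  obtain ⟨x, hxN, hx⟩ := SetLike.exists_of_lt hN
  obtain ⟨c, hc⟩ := he.exists_mul_eq (by rw [← mul_assoc, he.1.eq]) hx
  refine eq_top_iff.2 fun z _ => ?_
  have hz : z - x <• (c * z) ∈ N := hN.le <| by
    rw [mem_topKernel, op_smul_eq_mul, mul_sub, ← mul_assoc, ← mul_assoc, hc, sub_self]
    exact zero_mem _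
  simpa using add_mem hz (N.smul_mem (.op (c * z)) hxN)

/-- The simple top of `eA`, realized as a quotient of `A`. -/
def simpleTop (he : IsPrimitiveIdempotent A e) : IndecModA Aᵐᵒᵖ :=
  ⟨ModA.of (A ⧸ topKernel e),
    he.isIndecMod_quotient he.notMem_topKernel fun _ hx =>
      mem_topKernel.2 (hx ▸ zero_mem _)⟩

theorem isCompFactorMod_of_op_smul_ne_zero (he : IsPrimitiveIdempotent A e) {M : Type u}
    [AddCommGroup M] [Module Aᵐᵒᵖ M] {m : M} (hm : m <• e ≠ 0) :
    IsCompFactorMod Aᵐᵒᵖ (A ⧸ topKernel e) M := by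
  let f : A →ₗ[Aᵐᵒᵖ] M := orbitMap (m <• e)
  let N' : Submodule Aᵐᵒᵖ (LinearMap.range f) :=
    ((topKernel e).map f).comap (LinearMap.range f).subtype
  let ψ : A →ₗ[Aᵐᵒᵖ] LinearMap.range f ⧸ N' := N'.mkQ ∘ₗ f.rangeRestrict
  have hψ_surj : Function.Surjective ψ := N'.mkQ_surjective.comp f.surjective_rangeRestrict
  have mem_ker (x : A) : x ∈ LinearMap.ker ψ ↔ ∃ k ∈ topKernel e, f k = f x :=
    Submodule.Quotient.mk_eq_zero N'
  have ker_ne_top : LinearMap.ker ψ ≠ ⊤ := by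
    intro h
    obtain ⟨k, hk, hfk⟩ := (mem_ker e).1 (h ▸ Submodule.mem_top)
    refine hm (eq_zero_of_op_smul_eq (mem_topKernel.1 hk) ?_)
    calc m <• e <• (e * k) = m <• e <• k := by
          rw [← op_smul_mul, ← mul_assoc, he.1.eq, op_smul_mul]
      _ = m <• e <• e := hfk
      _ = m <• e := by rw [← op_smul_mul, he.1.eq]
  have hker : LinearMap.ker ψ = topKernel e :=
    (he.isCoatom_topKernel.le_iff_eq ker_ne_top).1 fun x hx => (mem_ker x).2 ⟨x, hx, rfl⟩
  exact ⟨(topKernel e).map f, LinearMap.range f, LinearMap.map_le_range,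
    ⟨(ψ.quotKerEquivOfSurjective hψ_surj).symm.trans (Submodule.quotEquivOfEq _ _ hker)⟩⟩

theorem isCompFactorMod_topKernel_iff (he : IsPrimitiveIdempotent A e) {M : Type u}
    [AddCommGroup M] [Module Aᵐᵒᵖ M] :
    IsCompFactorMod Aᵐᵒᵖ (A ⧸ topKernel e) M ↔ ∃ m : M, m <• e ≠ 0 :=
  ⟨he.exists_op_smul_ne_zero_of_isCompFactorMod,
    fun ⟨_, hm⟩ => he.isCompFactorMod_of_op_smul_ne_zero hm⟩

end IsPrimitiveIdempotent

/-! ### Paths in `ind A` produced by an element of the radical -/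

section RadicalPaths

variable {e f y : A}

/-- The right module of pairs `(m a, x)` with `e x = -y a`. If `e y = y`, then `Y × A` modulo these
pairs is the pushout of the maps `m` and `y` from `A` to `Y` and `eA`. -/
def pushoutKernel {Y : Type u} [AddCommGroup Y] [Module Aᵐᵒᵖ Y] (m : Y) (e y : A) :
    Submodule Aᵐᵒᵖ (Y × A) where
  carrier := {z | ∃ a : A, m <• a = z.1 ∧ e * z.2 = -(y * a)}
  add_mem' := by
    rintro _ _ ⟨a, ha, hea⟩ ⟨b, hb, heb⟩
    refine ⟨a + b, ?_, ?_⟩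
    · rw [Prod.fst_add, ← ha, ← hb, MulOpposite.op_add, add_smul]
    · rw [Prod.snd_add, mul_add, hea, heb, mul_add, neg_add]
  zero_mem' := ⟨0, by rw [MulOpposite.op_zero, zero_smul, Prod.fst_zero],
    by rw [Prod.snd_zero, mul_zero, mul_zero, neg_zero]⟩
  smul_mem' c := by
    rintro _ ⟨a, ha, hea⟩
    refine ⟨a * c.unop, ?_, ?_⟩
    · rw [op_smul_mul, ha, Prod.smul_fst, MulOpposite.op_unop]
    · rw [Prod.smul_snd, mul_smul_comm, hea, smul_neg, ← mul_assoc]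
      rfl

theorem mem_pushoutKernel {Y : Type u} [AddCommGroup Y] [Module Aᵐᵒᵖ Y] {m : Y} {z : Y × A} :
    z ∈ pushoutKernel m e y ↔ ∃ a : A, m <• a = z.1 ∧ e * z.2 = -(y * a) :=
  Iff.rfl

theorem mkQ_pushoutKernel_inl {Y : Type u} [AddCommGroup Y] [Module Aᵐᵒᵖ Y] (m : Y)
    (hey : e * y = y) :
    (pushoutKernel m e y).mkQ (m, 0) = (pushoutKernel m e y).mkQ (0, y) := by
  refine (Submodule.Quotient.eq _).2 ⟨1, ?_, ?_⟩
  · rw [MulOpposite.op_one, one_smul, Prod.fst_sub, sub_zero]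
  · rw [Prod.snd_sub, zero_sub, mul_neg, hey, mul_one]

/-- The annihilator of `m` intersected with the right ideal of those `x` with `e x ∈ rad² A`. -/
def annKernel {X : Type u} [AddCommGroup X] [Module Aᵐᵒᵖ X] (m : X) (e : A) :
    Submodule Aᵐᵒᵖ A where
  carrier := {x | m <• x = 0 ∧ e * x ∈ jacobsonRadSq A}
  add_mem' {x y} hx hy := by
    refine ⟨?_, ?_⟩
    · rw [MulOpposite.op_add, add_smul, hx.1, hy.1, add_zero]
    · rw [mul_add]
      exact add_mem hx.2 hy.2
  zero_mem' := ⟨by rw [MulOpposite.op_zero, zero_smul], by rw [mul_zero]; exact zero_mem _⟩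
  smul_mem' a x hx := by
    refine ⟨(op_smul_mul m x a.unop).trans ?_, ?_⟩
    · rw [hx.1, smul_zero]
    · rw [mul_smul_comm]
      exact jacobsonRadSq_mul_mem_right hx.2 a.unop

theorem reflTransGen_of_isIdempotentElem {R : Type u} [Ring R] {Y S : IndecModA R}
    {M : Type u} [AddCommGroup M] [Module R M] [IsNoetherian R M] [IsArtinian R M]
    (g : Y.1.M →ₗ[R] M) {p : M →ₗ[R] S.1.M} (hp : p ≠ 0)
    (h : ∀ ε : Module.End R M, IsIdempotentElem ε → ε ∘ₗ g = 0 → p ∘ₗ ε = 0) :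
    ReflTransGen HomArrow (ARVertex.mk Y) (ARVertex.mk S) := by
  obtain ⟨I, _, D, hD⟩ := hasIndecDecomp (R := R) M
  obtain ⟨l, hl⟩ : ∃ l, p ∘ₗ (D l).incl ∘ₗ (D l).proj ≠ 0 := by
    by_contra! hzero
    refine hp (LinearMap.ext fun x => ?_)
    have hx := congrArg p (LinearMap.congr_fun hD x)
    rw [LinearMap.sum_apply, map_sum] at hx
    exact hx.symm.trans (Finset.sum_eq_zero fun l _ => LinearMap.congr_fun (hzero l) x)
  have hε : IsIdempotentElem ((D l).incl ∘ₗ (D l).proj : Module.End R M) :=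
    LinearMap.ext fun x =>
      congrArg (D l).incl (LinearMap.congr_fun (D l).proj_comp_incl ((D l).proj x))
  have hg : (D l).proj ∘ₗ g ≠ 0 := fun h0 => hl <| h _ hε <| by
    rw [LinearMap.comp_assoc, h0, LinearMap.comp_zero]
  have hincl : p ∘ₗ (D l).incl ≠ 0 := fun h0 => hl <| by
    rw [← LinearMap.comp_assoc, h0, LinearMap.zero_comp]
  exact (reflTransGen_homArrow_of_ne_zero (Y := (D l).W) hg).trans
    (reflTransGen_homArrow_of_ne_zero (X := (D l).W) hincl)

variable [IsNoetherian Aᵐᵒᵖ A] [IsArtinian Aᵐᵒᵖ A]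

/-- In an extension `M` of `v A` by `g Y` in which `g Y` meets `v A` in a nonzero element, an
idempotent killing `g Y` maps `v` to a multiple `v t` with `t ∈ e A e`. If `t` were invertible,
then the idempotent would fix `v`, hence also the element of the intersection. -/
theorem comp_eq_zero_of_comp_eq_zero (he : IsPrimitiveIdempotent A e) {Y M S : Type u}
    [AddCommGroup Y] [Module Aᵐᵒᵖ Y] [AddCommGroup M] [Module Aᵐᵒᵖ M] [AddCommGroup S]
    [Module Aᵐᵒᵖ S] {g : Y →ₗ[Aᵐᵒᵖ] M} {p : M →ₗ[Aᵐᵒᵖ] S} {v : M} (hv : v <• e = v)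
    (hgen : ∀ x, ∃ b, ∃ a : A, x = g b + v <• a) (hYe : ∀ b : Y, b <• e = 0)
    (hpJ : ∀ j ∈ jacobsonRad A, p (v <• j) = 0) {m : Y} (hm : g m = v <• y) (hm0 : g m ≠ 0)
    {ε : Module.End Aᵐᵒᵖ M} (hε : IsIdempotentElem ε) (hεg : ε ∘ₗ g = 0) : p ∘ₗ ε = 0 := by
  have hεg' (b : Y) : ε (g b) = 0 := LinearMap.congr_fun hεg b
  have hεε (x : M) : ε (ε x) = ε x := LinearMap.congr_fun hε x
  obtain ⟨b, c, hbc⟩ := hgen (ε v)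
  have hεv : ε v = v <• (e * c * e) := by
    calc ε v = ε v <• e := by rw [← map_smul, hv]
      _ = g (b <• e) + v <• c <• e := by rw [hbc, smul_add, map_smul]
      _ = v <• (e * c * e) := by rw [hYe, map_zero, zero_add, op_smul_mul, op_smul_mul, hv]
  have hJ : e * c * e ∈ jacobsonRad A := by
    by_contra hJ
    obtain ⟨d, hd⟩ := he.exists_mul_eq (by simp only [← mul_assoc, he.1.eq]) hJ
    have hvd : v = ε (v <• d) := by rw [map_smul, hεv, ← op_smul_mul, hd, hv]
    have hfix : ε v = v := by rw [hvd, hεε]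
    exact hm0 (by rw [← hεg' m, hm, map_smul, hfix])
  refine LinearMap.ext fun x => ?_
  obtain ⟨b', a, rfl⟩ := hgen x
  rw [LinearMap.comp_apply, map_add, hεg', zero_add, map_smul, hεv, ← op_smul_mul]
  exact hpJ _ (jacobsonRad_mul_mem_right hJ a)

variable [IsArtinianRing A]

theorem IsPrimitiveIdempotent.eq_zero_of_mul_eq_zero (hf : IsPrimitiveIdempotent A f)
    (hyf : y * f = y) (hy0 : y ≠ 0) {M : Type u} [AddCommGroup M] [Module Aᵐᵒᵖ M] {m : M}
    (hmf : m <• f = m) {a : A} (hma : m <• a = m) (hya : y * a = 0) : m = 0 := by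
  refine eq_zero_of_op_smul_eq (a := f * a * f) ?_ (by simp only [op_smul_mul, hmf, hma])
  by_contra hJ
  obtain ⟨c, hc⟩ := hf.exists_mul_eq (by simp only [← mul_assoc, hf.1.eq]) hJ
  exact hy0 (by rw [← hyf, ← hc]; simp only [← mul_assoc, hyf, hya, zero_mul])

theorem IsPrimitiveIdempotent.reflTransGen_simpleTop (he : IsPrimitiveIdempotent A e)
    (hf : IsPrimitiveIdempotent A f) (hy : y ∈ jacobsonRad A) (hey : e * y = y) (hyf : y * f = y)
    (hy0 : y ≠ 0) {Y : IndecModA Aᵐᵒᵖ} {m : Y.1.M} (hmf : m <• f = m) (hm : m ≠ 0)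
    (hYe : ∀ b : Y.1.M, b <• e = 0) :
    ReflTransGen HomArrow (ARVertex.mk Y) (ARVertex.mk he.simpleTop) := by
  let W : Submodule Aᵐᵒᵖ (Y.1.M × A) := pushoutKernel m e y
  let g : Y.1.M →ₗ[Aᵐᵒᵖ] (Y.1.M × A) ⧸ W := W.mkQ ∘ₗ LinearMap.inl Aᵐᵒᵖ Y.1.M A
  let v : (Y.1.M × A) ⧸ W := W.mkQ (0, 1)
  have hv (a : A) : v <• a = W.mkQ (0, a) := by
    rw [← map_smul, Prod.smul_mk, smul_zero, op_smul_eq_mul, one_mul]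
  have hW : W ≤ LinearMap.ker ((topKernel e).mkQ ∘ₗ LinearMap.snd Aᵐᵒᵖ Y.1.M A) := by
    rintro x ⟨a, -, hx⟩
    refine (Submodule.Quotient.mk_eq_zero _).2 (mem_topKernel.2 ?_)
    rw [LinearMap.snd_apply, hx]
    exact neg_mem (jacobsonRad_mul_mem_right hy a)
  let p : (Y.1.M × A) ⧸ W →ₗ[Aᵐᵒᵖ] he.simpleTop.1.M := W.liftQ _ hW
  have hve : v <• e = v := by
    rw [hv]
    refine (Submodule.Quotient.eq W).2 ⟨0, ?_, ?_⟩
    · rw [MulOpposite.op_zero, zero_smul, Prod.fst_sub, sub_zero]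
    · rw [Prod.snd_sub, mul_sub, he.1.eq, mul_one, sub_self, mul_zero, neg_zero]
  have hgm : g m = v <• y := by
    rw [hv]
    exact mkQ_pushoutKernel_inl m hey
  have hgm0 : g m ≠ 0 := fun h0 => by
    obtain ⟨a, hma, hya⟩ := mem_pushoutKernel.1 ((Submodule.Quotient.mk_eq_zero W).1 h0)
    rw [LinearMap.inl_apply, mul_zero, eq_comm, neg_eq_zero] at hya
    exact hm (hf.eq_zero_of_mul_eq_zero hyf hy0 hmf hma hya)
  refine reflTransGen_of_isIdempotentElem g (p := p) (fun h0 => he.notMem_topKernel ?_)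
    fun ε hε => comp_eq_zero_of_comp_eq_zero he hve ?_ hYe (fun j hj => ?_) hgm hgm0 hε
  · exact (Submodule.Quotient.mk_eq_zero _).1 (LinearMap.congr_fun h0 (W.mkQ (0, e)))
  · intro x
    obtain ⟨⟨b, a⟩, rfl⟩ := W.mkQ_surjective x
    refine ⟨b, a, ?_⟩
    rw [hv, LinearMap.comp_apply, ← map_add, LinearMap.inl_apply, Prod.mk_add_mk, add_zero,
      zero_add]
  · rw [hv]
    exact (Submodule.Quotient.mk_eq_zero _).2 (Ideal.mul_mem_left _ _ hj)

/-- Both the simple top of `fA`, by left multiplication with `y`, and `m` give nonzero maps to and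
from the quotient of `eA` by the intersection of `rad² A` with the annihilator of `m`. -/
theorem IsPrimitiveIdempotent.simpleTop_reflTransGen (he : IsPrimitiveIdempotent A e)
    (hf : IsPrimitiveIdempotent A f) (hy : y ∈ jacobsonRad A) (hey : e * y = y) (hyf : y * f = y)
    (hysq : y ∉ jacobsonRadSq A) {X : IndecModA Aᵐᵒᵖ} {m : X.1.M} (hme : m <• e = m) (hm : m ≠ 0)
    (hXf : ∀ b : X.1.M, b <• f = 0) :
    ReflTransGen HomArrow (ARVertex.mk hf.simpleTop) (ARVertex.mk X) := by
  let L : Submodule Aᵐᵒᵖ A := annKernel m e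
  let Q : IndecModA Aᵐᵒᵖ := ⟨ModA.of (A ⧸ L), he.isIndecMod_quotient (fun h => hm (hme ▸ h.1))
    fun _ hx => ⟨by rw [← hme, ← op_smul_mul, hx, MulOpposite.op_zero, zero_smul],
      hx ▸ zero_mem _⟩⟩
  let φ : (hf.simpleTop).1.M →ₗ[Aᵐᵒᵖ] Q.1.M := (topKernel f).liftQ
    (L.mkQ ∘ₗ LinearMap.mulLeft Aᵐᵒᵖ y) fun a ha => (Submodule.Quotient.mk_eq_zero L).2 <| by
      rw [LinearMap.mulLeft_apply]
      refine ⟨?_, ?_⟩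
      · rw [← hyf, op_smul_mul, op_smul_mul, hXf, smul_zero]
      · rw [← mul_assoc, hey, ← hyf, mul_assoc]
        exact Ideal.subset_span ⟨y, hy, f * a, ha, rfl⟩
  have hφ : φ ≠ 0 := fun h0 => hysq <| by
    have hyL : y * 1 ∈ L :=
      (Submodule.Quotient.mk_eq_zero L).1 (LinearMap.congr_fun h0 ((topKernel f).mkQ 1))
    rw [← hey, ← mul_one y]
    exact hyL.2
  let ψ : Q.1.M →ₗ[Aᵐᵒᵖ] X.1.M := L.liftQ (orbitMap m) fun a ha => ha.1
  have hψ : ψ ≠ 0 := fun h0 => hm <| by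
    rw [← hme]
    exact LinearMap.congr_fun h0 (L.mkQ e)
  exact (reflTransGen_homArrow_of_ne_zero hφ).trans (reflTransGen_homArrow_of_ne_zero hψ)

end RadicalPaths

end SimpleTop

/-! ### Corners and paths of the quiver -/

section Quiver

variable {A : Type u} [Ring A]

namespace CompleteIdemFamily

variable {E : CompleteIdemFamily A} {i k : Fin E.n}

theorem mul_eq_sum (E : CompleteIdemFamily A) (a b : A) :
    a * b = ∑ j, a * E.e j * (E.e j * b) := by
  calc a * b = a * (∑ j, E.e j) * b := by rw [E.total, mul_one]
    _ = ∑ j, a * E.e j * (E.e j * b) := by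
      rw [Finset.mul_sum, Finset.sum_mul]
      refine Finset.sum_congr rfl fun j _ => ?_
      rw [mul_assoc, mul_assoc, ← mul_assoc (E.e j), (E.prim j).1.eq]

theorem one_sub_sum (E : CompleteIdemFamily A) (S : Finset (Fin E.n)) :
    1 - ∑ i ∈ S, E.e i = ∑ i ∈ Sᶜ, E.e i := by
  rw [← E.total, ← Finset.sum_add_sum_compl S, add_sub_cancel_left]

theorem orthogonalIdempotents (E : CompleteIdemFamily A) : OrthogonalIdempotents E.e :=
  ⟨fun i => (E.prim i).1, fun i j hij => E.orth i j hij⟩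

theorem sum_mul_of_mem (E : CompleteIdemFamily A) {S : Finset (Fin E.n)} {i : Fin E.n}
    (hi : i ∈ S) : (∑ j ∈ S, E.e j) * E.e i = E.e i := by
  simp [Finset.sum_mul, E.orthogonalIdempotents.mul_eq, hi]

theorem exists_mem_jacobsonRad_of_qaArrow (h : QAarrow A E i k) :
    ∃ y ∈ jacobsonRad A, E.e i * y = y ∧ y * E.e k = y ∧ y ∉ jacobsonRadSq A := by
  obtain ⟨y, hy, hsq⟩ := h
  refine ⟨E.e i * y * E.e k, jacobsonRad_mul_mem_right (Ideal.mul_mem_left _ _ hy) _, ?_, ?_, hsq⟩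
  · rw [← mul_assoc, ← mul_assoc, (E.prim i).1.eq]
  · rw [mul_assoc, (E.prim k).1.eq]

theorem mul_mul_mem_jacobsonRad_pow_succ {n : ℕ}
    (h : ∀ i k, ¬ReflTransGen (QAarrow A E) i k → ∀ a, E.e i * a * E.e k ∈ jacobsonRad A ^ n)
    (hik : ¬ReflTransGen (QAarrow A E) i k) {z : A} (hz : z ∈ jacobsonRadSq A) :
    E.e i * z * E.e k ∈ jacobsonRad A ^ (n + 1) := by
  have : (jacobsonRad A).IsTwoSided := by unfold jacobsonRad; infer_instance
  rw [jacobsonRadSq_eq_mul] at hz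
  induction hz using Submodule.smul_induction_on' with
  | smul a ha b hb =>
    have hsum : E.e i * (a * b) * E.e k = ∑ j, E.e i * a * E.e j * (E.e j * b * E.e k) := by
      rw [← mul_assoc, mul_assoc _ b, E.mul_eq_sum]
      simp only [mul_assoc]
    rw [smul_eq_mul, hsum]
    refine sum_mem fun j _ => ?_
    by_cases hij : ReflTransGen (QAarrow A E) i j
    · rw [Ideal.IsTwoSided.pow_succ]
      exact Ideal.mul_mem_mul (Ideal.mul_mem_right _ _ (Ideal.mul_mem_left _ _ ha))
        (h j k (fun hjk => hik (hij.trans hjk)) b)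
    · rw [Submodule.pow_succ]
      exact Ideal.mul_mem_mul (h i j hij a) (Ideal.mul_mem_right _ _ (Ideal.mul_mem_left _ _ hb))
  | add x hx y hy ihx ihy =>
    rw [mul_add, add_mul]
    exact add_mem ihx ihy

theorem convexVertexSet_of_reflTransGen {S : Set (Fin E.n)}
    (hS : ∀ i ∈ S, ∀ j ∈ S, ∀ k, ReflTransGen (QAarrow A E) i k →
      ReflTransGen (QAarrow A E) k j → k ∈ S) : ConvexVertexSet A E S := by
  intro n c hc h0 hn k hk
  have path {a b : ℕ} (hab : a ≤ b) (hb : b ≤ n) : ReflTransGen (QAarrow A E) (c a) (c b) :=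
    (reflTransGen_of_succ_of_le (fun a b => QAarrow A E (c a) (c b))
      (fun l hl => hc l (hl.2.trans_le hb)) hab).lift c fun _ _ h => h
  exact hS _ h0 _ hn _ (path k.zero_le hk) (path hk le_rfl)

variable [IsNoetherian Aᵐᵒᵖ A] [IsArtinian Aᵐᵒᵖ A]

theorem mul_mul_mem_jacobsonRad_pow (hb : IsBasicAlgebra A) (n : ℕ)
    (hik : ¬ReflTransGen (QAarrow A E) i k) (a : A) : E.e i * a * E.e k ∈ jacobsonRad A ^ n := by
  induction n generalizing i k a with
  | zero => rw [Submodule.pow_zero, Ideal.one_eq_top]; exact Submodule.mem_top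
  | succ n ih =>
    have hne : i ≠ k := fun h => hik (h ▸ .refl)
    have hmul : E.e i * (E.e i * a * E.e k) * E.e k = E.e i * a * E.e k := by
      simp only [mul_assoc, (E.prim k).1.eq]
      rw [← mul_assoc, (E.prim i).1.eq]
    have hsq : E.e i * a * E.e k ∈ jacobsonRadSq A := by
      by_contra hsq
      refine hik (.single ⟨E.e i * a * E.e k, ?_, hmul.symm ▸ hsq⟩)
      exact hb.mul_mul_mem_jacobsonRad (E.prim i) (E.prim k) (E.orth i k hne)
        (E.orth k i hne.symm) a
    rw [← hmul]
    exact mul_mul_mem_jacobsonRad_pow_succ (fun i k h a => ih h a) hik hsq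

theorem mul_mul_eq_zero_of_not_reflTransGen [IsArtinianRing A] (hb : IsBasicAlgebra A)
    (hik : ¬ReflTransGen (QAarrow A E) i k) (a : A) : E.e i * a * E.e k = 0 := by
  obtain ⟨n, hn⟩ := IsArtinianRing.isNilpotent_jacobson_bot (R := A)
  have h := mul_mul_mem_jacobsonRad_pow hb n hik a
  rwa [jacobsonRad, hn] at h

theorem sum_mul_one_sub_mul_sum_eq_zero [IsArtinianRing A] (hb : IsBasicAlgebra A)
    {S : Finset (Fin E.n)}
    (hS : ∀ i ∈ S, ∀ j ∈ S, ∀ k, ReflTransGen (QAarrow A E) i k →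
      ReflTransGen (QAarrow A E) k j → k ∈ S) (a b : A) :
    (∑ i ∈ S, E.e i) * a * (1 - ∑ i ∈ S, E.e i) * b * ∑ i ∈ S, E.e i = 0 := by
  rw [one_sub_sum]
  simp only [Finset.sum_mul, Finset.mul_sum]
  refine Finset.sum_eq_zero fun j hj => Finset.sum_eq_zero fun k hk =>
    Finset.sum_eq_zero fun i hi => ?_
  by_cases hik : ReflTransGen (QAarrow A E) i k
  · have hkj : ¬ReflTransGen (QAarrow A E) k j := fun hkj =>
      Finset.mem_compl.1 hk (hS i hi j hj k hik hkj)
    rw [mul_assoc, mul_assoc, ← mul_assoc (E.e k), mul_mul_eq_zero_of_not_reflTransGen hb hkj,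
      mul_zero]
  · rw [mul_mul_eq_zero_of_not_reflTransGen hb hik, zero_mul, zero_mul]

end CompleteIdemFamily

end Quiver

/-! ### The vertices supporting a set of modules -/

section Support

open scoped RightActions

variable {A : Type u} [Ring A]

/-- The vertices `i` such that the simple top of `e_i A` is a composition factor of some module
in `Γ`, encoded as `M e_i ≠ 0`. -/
def CompleteIdemFamily.support (E : CompleteIdemFamily A) (Γ : Set (ARVertex Aᵐᵒᵖ)) :
    Set (Fin E.n) :=
  {i | ∃ X : IndecModA Aᵐᵒᵖ, ARVertex.mk X ∈ Γ ∧ ∃ m : X.1.M, m <• E.e i ≠ 0}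

namespace CompleteIdemFamily

variable {E : CompleteIdemFamily A} {Γ : Set (ARVertex Aᵐᵒᵖ)} {i j k : Fin E.n}

theorem op_smul_eq_zero_of_notMem_support (hk : k ∉ E.support Γ) {X : IndecModA Aᵐᵒᵖ}
    (hX : ARVertex.mk X ∈ Γ) (m : X.1.M) : m <• E.e k = 0 := by
  by_contra hm
  exact hk ⟨X, hX, m, hm⟩

theorem op_smul_op_smul_self (E : CompleteIdemFamily A) (i : Fin E.n) {M : Type u}
    [AddCommGroup M] [Module Aᵐᵒᵖ M] (m : M) : m <• E.e i <• E.e i = m <• E.e i := by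
  rw [← op_smul_mul, (E.prim i).1.eq]

variable [IsNoetherian Aᵐᵒᵖ A] [IsArtinian Aᵐᵒᵖ A] [IsArtinianRing A]

theorem reflTransGen_simpleTop_of_qaArrow (hb : IsBasicAlgebra A) (h : QAarrow A E i k) :
    ReflTransGen HomArrow (ARVertex.mk (E.prim k).simpleTop)
      (ARVertex.mk (E.prim i).simpleTop) := by
  by_cases hik : i = k
  · subst hik
    exact .refl
  obtain ⟨y, hy, hiy, hyk, hysq⟩ := exists_mem_jacobsonRad_of_qaArrow h
  refine (E.prim i).simpleTop_reflTransGen (E.prim k) hy hiy hyk hysq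
    (mkQ_op_smul_self (E.prim i).1 _) (E.prim i).mkQ_topKernel_ne_zero fun b => ?_
  obtain ⟨x, rfl⟩ := (topKernel (E.e i)).mkQ_surjective b
  refine (Submodule.Quotient.mk_eq_zero _).2 (mem_topKernel.2 ?_)
  change E.e i * (x * E.e k) ∈ jacobsonRad A
  rw [← mul_assoc]
  exact hb.mul_mul_mem_jacobsonRad (E.prim i) (E.prim k) (E.orth i k hik)
    (E.orth k i (Ne.symm hik)) x

theorem exists_reflTransGen_simpleTop (hb : IsBasicAlgebra A) (hj : j ∈ E.support Γ)
    (hkj : ReflTransGen (QAarrow A E) k j) (hk : k ∉ E.support Γ) :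
    ∃ x ∈ Γ, ReflTransGen HomArrow x (ARVertex.mk (E.prim k).simpleTop) := by
  induction hkj using ReflTransGen.head_induction_on with
  | refl => exact absurd hj hk
  | @head k l hkl _ ih =>
    by_cases hl : l ∈ E.support Γ
    · obtain ⟨X, hX, m, hm⟩ := hl
      obtain ⟨y, hy, hky, hyl, hysq⟩ := exists_mem_jacobsonRad_of_qaArrow hkl
      have hy0 : y ≠ 0 := fun h => hysq (h ▸ zero_mem _)
      exact ⟨_, hX, (E.prim k).reflTransGen_simpleTop (E.prim l) hy hky hyl hy0
        (E.op_smul_op_smul_self l m) hm (op_smul_eq_zero_of_notMem_support hk hX)⟩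
    · obtain ⟨x, hx, hxl⟩ := ih hl
      exact ⟨x, hx, hxl.trans (reflTransGen_simpleTop_of_qaArrow hb hkl)⟩

theorem exists_simpleTop_reflTransGen (hb : IsBasicAlgebra A) (hi : i ∈ E.support Γ)
    (hik : ReflTransGen (QAarrow A E) i k) (hk : k ∉ E.support Γ) :
    ∃ x ∈ Γ, ReflTransGen HomArrow (ARVertex.mk (E.prim k).simpleTop) x := by
  induction hik with
  | refl => exact absurd hi hk
  | @tail l k _ hlk ih =>
    by_cases hl : l ∈ E.support Γ
    · obtain ⟨X, hX, m, hm⟩ := hl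
      obtain ⟨y, hy, hly, hyk, hysq⟩ := exists_mem_jacobsonRad_of_qaArrow hlk
      exact ⟨_, hX, (E.prim l).simpleTop_reflTransGen (E.prim k) hy hly hyk hysq
        (E.op_smul_op_smul_self l m) hm (op_smul_eq_zero_of_notMem_support hk hX)⟩
    · obtain ⟨x, hx, hlx⟩ := ih hl
      exact ⟨x, hx, (reflTransGen_simpleTop_of_qaArrow hb hlk).trans hlx⟩

theorem mem_support_of_reflTransGen (hb : IsBasicAlgebra A)
    (hΓ : IsCycleFiniteCyclicComponent Γ) (hi : i ∈ E.support Γ) (hj : j ∈ E.support Γ)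
    (hik : ReflTransGen (QAarrow A E) i k) (hkj : ReflTransGen (QAarrow A E) k j) :
    k ∈ E.support Γ := by
  by_contra hk
  obtain ⟨x, hx, hxk⟩ := exists_reflTransGen_simpleTop hb hj hkj hk
  obtain ⟨y, hy, hky⟩ := exists_simpleTop_reflTransGen hb hi hik hk
  refine hk ⟨_, hΓ.mem_of_reflTransGen_homArrow hx hy hxk hky, (topKernel (E.e k)).mkQ (E.e k), ?_⟩
  exact (mkQ_op_smul_self (E.prim k).1 _).trans_ne (E.prim k).mkQ_topKernel_ne_zero

end CompleteIdemFamily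

/-! ### The idempotent of a decomposition of the regular module -/

theorem exists_isIdempotentElem_of_isCompl {P Q : Submodule Aᵐᵒᵖ A} (h : IsCompl P Q) :
    ∃ e : A, IsIdempotentElem e ∧ (∀ x, x ∈ P ↔ e * x = x) ∧ ∀ x, x ∈ Q ↔ e * x = 0 := by
  let π : A →ₗ[Aᵐᵒᵖ] A := P.projection Q h
  have hπ (x : A) : π x = π 1 * x := by
    rw [← op_smul_eq_mul, ← map_smul, op_smul_eq_mul, one_mul]
  refine ⟨π 1, ?_, fun x => ?_, fun x => ?_⟩
  · rw [IsIdempotentElem, ← hπ]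
    exact Submodule.projection_apply_left h ⟨π 1, Submodule.projection_apply_mem h 1⟩
  · rw [← hπ, Submodule.projection_eq_self_iff]
  · rw [← hπ, Submodule.projection_apply_eq_zero_iff]

section Top

variable [IsArtinianRing A] {e : A} {P : Submodule Aᵐᵒᵖ A}

theorem mem_moduleJacobson_of_mem_jacobsonRad {x : A} (hx : x ∈ jacobsonRad A) :
    x ∈ Module.jacobson Aᵐᵒᵖ A := by
  refine Submodule.mem_sInf.2 fun N (hN : IsCoatom N) => ?_
  by_contra hxN
  have hsup : N ⊔ Submodule.span Aᵐᵒᵖ {x} = ⊤ :=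
    hN.2 _ (left_lt_sup.2 fun h => hxN (h (Submodule.mem_span_singleton_self x)))
  obtain ⟨n, hn, w, hw, hnw⟩ := Submodule.mem_sup.1 (hsup ▸ Submodule.mem_top (x := (1 : A)))
  obtain ⟨a, rfl⟩ := Submodule.mem_span_singleton.1 hw
  have hnil : IsNilpotent (x * a.unop) :=
    isNilpotent_of_mem_jacobsonRad (jacobsonRad_mul_mem_right hx a.unop)
  obtain ⟨u, hu⟩ := hnil.isUnit_one_sub.exists_right_inv
  have hn1 : n = 1 - x * a.unop := eq_sub_of_add_eq hnw
  have hnu : n * u = 1 := by rw [hn1, hu]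
  refine hN.1 (eq_top_iff.2 fun t _ => ?_)
  rw [← one_mul t, ← hnu, mul_assoc]
  exact N.smul_mem (.op (u * t)) hn

theorem mem_modRadical_of_mem_jacobsonRad (hP : ∀ x, x ∈ P ↔ e * x = x)
    (he : IsIdempotentElem e) {x : P} (hx : (x : A) ∈ jacobsonRad A) : x ∈ modRadical Aᵐᵒᵖ P := by
  let π : A →ₗ[Aᵐᵒᵖ] P := (LinearMap.mulLeft Aᵐᵒᵖ e).codRestrict P fun a =>
    (hP _).2 (by rw [LinearMap.mulLeft_apply, ← mul_assoc, he.eq])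
  have hπ : π x = x := Subtype.ext ((hP _).1 x.2)
  rw [← hπ]
  exact Module.le_comap_jacobson π (mem_moduleJacobson_of_mem_jacobsonRad hx)

variable [IsNoetherian Aᵐᵒᵖ A] [IsArtinian Aᵐᵒᵖ A]

theorem IsPrimitiveIdempotent.notMem_moduleJacobson (he : IsPrimitiveIdempotent A e) :
    e ∉ Module.jacobson Aᵐᵒᵖ A :=
  fun h => he.notMem_topKernel (Submodule.mem_sInf.1 h _ he.isCoatom_topKernel)

theorem CompleteIdemFamily.mem_iff_exists_op_smul_ne_zero (hb : IsBasicAlgebra A)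
    {E : CompleteIdemFamily A} {S : Finset (Fin E.n)}
    (hP : ∀ x, x ∈ P ↔ (∑ i ∈ S, E.e i) * x = x) {i : Fin E.n} :
    i ∈ S ↔ ∃ v : P ⧸ modRadical Aᵐᵒᵖ P, v <• E.e i ≠ 0 := by
  constructor
  · intro hi
    let p : P := ⟨E.e i, (hP _).2 (E.sum_mul_of_mem hi)⟩
    have hp : p <• E.e i = p := Subtype.ext (E.prim i).1.eq
    refine ⟨(modRadical Aᵐᵒᵖ P).mkQ p, fun h => (E.prim i).notMem_moduleJacobson ?_⟩
    rw [← map_smul, hp] at h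
    exact Module.le_comap_jacobson P.subtype ((Submodule.Quotient.mk_eq_zero _).1 h)
  · rintro ⟨v, hv⟩
    by_contra hi
    obtain ⟨x, rfl⟩ := (modRadical Aᵐᵒᵖ P).mkQ_surjective v
    refine hv ((Submodule.Quotient.mk_eq_zero _).2 (mem_modRadical_of_mem_jacobsonRad hP
      E.orthogonalIdempotents.isIdempotentElem_sum ?_))
    change (x : A) * E.e i ∈ jacobsonRad A
    rw [← (hP x).1 x.2, Finset.sum_mul, Finset.sum_mul]
    refine sum_mem fun j hj => ?_
    have hji : j ≠ i := fun h => hi (h ▸ hj)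
    exact hb.mul_mul_mem_jacobsonRad (E.prim j) (E.prim i) (E.orth j i hji) (E.orth i j hji.symm) x

end Top

end Support

/-! ### The quotient by the trace ideal -/

section Trace

variable {A : Type u} [Ring A] {e : A}

theorem traceIdeal_eq_span (he : IsIdempotentElem e) {Q : Submodule Aᵐᵒᵖ A}
    (hQ : ∀ x, x ∈ Q ↔ e * x = 0) : traceIdeal A Q = TwoSidedIdeal.span {1 - e} := by
  have hone : 1 - e ∈ Q := (hQ _).2 he.mul_one_sub_self
  refine le_antisymm (TwoSidedIdeal.span_le.2 (Set.iUnion_subset fun f => ?_))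
    (TwoSidedIdeal.span_le.2 (Set.singleton_subset_iff.2 ?_))
  · rintro _ ⟨q, rfl⟩
    have hq : (1 - e) * (q : A) = q := by rw [sub_mul, one_mul, (hQ q).1 q.2, sub_zero]
    have hfq : f q = f ⟨1 - e, hone⟩ * ((1 - e) * q) := by
      rw [hq, ← op_smul_eq_mul, ← map_smul]
      exact congrArg f (Subtype.ext hq.symm)
    rw [SetLike.mem_coe, hfq]
    exact TwoSidedIdeal.mul_mem_left _ _ _
      (TwoSidedIdeal.mul_mem_right _ _ _ (TwoSidedIdeal.subset_span rfl))
  · exact TwoSidedIdeal.subset_span (Set.mem_iUnion.2 ⟨Q.subtype, ⟨1 - e, hone⟩, rfl⟩)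

/-- The compression `a ↦ e a e`, which is multiplicative as soon as `e A (1 - e) A e = 0`. -/
def cornerHom (he : IsIdempotentElem e) (h : ∀ a b, e * a * (1 - e) * b * e = 0) :
    A →ₙ+* cornerRing A e where
  toFun a := ⟨e * a * e, by rw [← mul_assoc, ← mul_assoc, he.eq], by rw [mul_assoc, he.eq]⟩
  map_mul' a b := Subtype.ext <|
    calc e * (a * b) * e = e * a * (1 - e) * b * e + e * a * e * b * e := by noncomm_ring
      _ = e * a * (e * e) * b * e := by rw [h, zero_add, he.eq]
      _ = e * a * e * (e * b * e) := by simp only [mul_assoc]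
  map_zero' := Subtype.ext (show e * 0 * e = 0 by rw [mul_zero, zero_mul])
  map_add' a b := Subtype.ext <|
    show e * (a + b) * e = e * a * e + e * b * e by rw [mul_add, add_mul]

theorem cornerHom_coe (he : IsIdempotentElem e) (h : ∀ a b, e * a * (1 - e) * b * e = 0)
    (x : cornerRing A e) : cornerHom he h x = x :=
  Subtype.ext (by change e * x * e = x; rw [x.2.1, x.2.2])

theorem ker_cornerHom (he : IsIdempotentElem e) (h : ∀ a b, e * a * (1 - e) * b * e = 0) :
    TwoSidedIdeal.ker (cornerHom he h) = TwoSidedIdeal.span {1 - e} := by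
  refine le_antisymm (fun a ha => ?_) (TwoSidedIdeal.span_le.2 (Set.singleton_subset_iff.2 ?_))
  · have hone : 1 - e ∈ TwoSidedIdeal.span {1 - e} := TwoSidedIdeal.subset_span rfl
    have hae : e * a * e = 0 := congrArg Subtype.val ((TwoSidedIdeal.mem_ker _).1 ha)
    have ha' : a = (1 - e) * a + e * a * (1 - e) := by
      rw [mul_sub, hae]
      noncomm_ring
    rw [ha']
    exact add_mem (TwoSidedIdeal.mul_mem_right _ _ _ hone) (TwoSidedIdeal.mul_mem_left _ _ _ hone)
  · refine (TwoSidedIdeal.mem_ker _).2 (Subtype.ext ?_)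
    change e * (1 - e) * e = 0
    rw [he.mul_one_sub_self, zero_mul]

theorem nonempty_quotient_span_ringEquiv_cornerRing (he : IsIdempotentElem e)
    (h : ∀ a b, e * a * (1 - e) * b * e = 0) :
    Nonempty ((TwoSidedIdeal.span {1 - e}).ringCon.Quotient ≃+* cornerRing A e) := by
  rw [← ker_cornerHom he h]
  let I : TwoSidedIdeal A := TwoSidedIdeal.ker (cornerHom he h)
  let F : cornerRing A e →ₙ+* I.ringCon.Quotient :=
    (I.ringCon.mk' : A →ₙ+* I.ringCon.Quotient).comp
      (NonUnitalSubringClass.subtype (cornerRing A e))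
  have hF (a : A) (x : cornerRing A e) : F x = I.ringCon.mk' a ↔ x = cornerHom he h a := by
    conv_rhs => rw [← cornerHom_coe he h x]
    exact (RingCon.eq _).trans (TwoSidedIdeal.ker_ringCon _)
  refine ⟨(RingEquiv.ofBijective F ⟨fun x y hxy => ?_, fun z => ?_⟩).symm⟩
  · rw [(hF y x).1 hxy, cornerHom_coe]
  · obtain ⟨a, rfl⟩ := I.ringCon.mk'_surjective z
    exact ⟨_, (hF a _).2 rfl⟩

end Trace

theorem GammaDecomp.mem_iff_mem_support {A : Type u} [Ring A] [IsNoetherian Aᵐᵒᵖ A]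
    [IsArtinian Aᵐᵒᵖ A] [IsArtinianRing A] (hb : IsBasicAlgebra A) {Γ : Set (ARVertex Aᵐᵒᵖ)}
    (D : GammaDecomp A Γ) {E : CompleteIdemFamily A} {S : Finset (Fin E.n)}
    (hP : ∀ x, x ∈ D.P ↔ (∑ i ∈ S, E.e i) * x = x) {i : Fin E.n} :
    i ∈ S ↔ i ∈ E.support Γ := by
  have : IsSimpleModule Aᵐᵒᵖ (A ⧸ topKernel (E.e i)) :=
    isSimpleModule_iff_isCoatom.2 (E.prim i).isCoatom_topKernel
  rw [CompleteIdemFamily.mem_iff_exists_op_smul_ne_zero hb hP,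
    ← (E.prim i).isCompFactorMod_topKernel_iff, D.top_factors _ this]
  exact ⟨fun ⟨_, hx, X, hX, hm⟩ => ⟨X, hX ▸ hx, (E.prim i).isCompFactorMod_topKernel_iff.1 hm⟩,
    fun ⟨X, hX, hm⟩ => ⟨_, hX, X, rfl, (E.prim i).isCompFactorMod_topKernel_iff.2 hm⟩⟩

theorem isNoetherian_mulOpposite_of_isArtinian (A : Type*) [Ring A] [IsArtinian Aᵐᵒᵖ A] :
    IsNoetherian Aᵐᵒᵖ A :=
  have : IsArtinianRing Aᵐᵒᵖ :=
    isArtinian_of_linearEquiv (MulOpposite.opLinearEquiv Aᵐᵒᵖ : A ≃ₗ[Aᵐᵒᵖ] Aᵐᵒᵖ)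
  IsSemiprimaryRing.isNoetherian_iff_isArtinian.2 ‹_›

theorem support_algebra_iso_corner_general (A : Type u) [Ring A] [IsArtinianRing A]
    [IsArtinian Aᵐᵒᵖ A] (hbasic : IsBasicAlgebra A) (Γ : Set (ARVertex Aᵐᵒᵖ))
    (hΓ : IsCycleFiniteCyclicComponent Γ) (D : GammaDecomp A Γ) :
    ∃ e : A, IsConvexIdempotent A e ∧
      Nonempty ((traceIdeal A D.Q).ringCon.Quotient ≃+* cornerRing A e) := by
  have := isNoetherian_mulOpposite_of_isArtinian A
  obtain ⟨e, he, hP, hQ⟩ := exists_isIdempotentElem_of_isCompl D.compl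
  obtain ⟨E, S, rfl⟩ := exists_completeIdemFamily he
  have hS : ∀ i ∈ S, ∀ j ∈ S, ∀ k, ReflTransGen (QAarrow A E) i k →
      ReflTransGen (QAarrow A E) k j → k ∈ S := by
    simp only [D.mem_iff_mem_support hbasic hP]
    exact fun i hi j hj k => CompleteIdemFamily.mem_support_of_reflTransGen hbasic hΓ hi hj
  refine ⟨_, ⟨E, S, CompleteIdemFamily.convexVertexSet_of_reflTransGen hS, rfl⟩, ?_⟩
  rw [traceIdeal_eq_span he hQ]
  exact nonempty_quotient_span_ringEquiv_cornerRing he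
    (CompleteIdemFamily.sum_mul_one_sub_mul_sum_eq_zero hbasic hS)

/-- **Corollary 3.** Let `A` be a basic indecomposable artin algebra and `Γ` a cycle-finite
component of the cyclic quiver `_cΓ_A`. Then there exists a convex idempotent `e_Γ` of `A`
such that the support algebra `supp(Γ) = A / t_A(Γ)` is isomorphic to the corner algebra
`e_Γ A e_Γ`. -/
theorem support_algebra_iso_corner
    (K A : Type u) [CommRing K] [IsArtinianRing K] [Ring A] [Algebra K A]
    [Module.Finite K A] (hbasic : IsBasicAlgebra A) (hconn : IsConnectedAlgebra A)
    (Γ : Set (ARVertex Aᵐᵒᵖ)) (hΓ : IsCycleFiniteCyclicComponent Γ) :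
    ∀ D : GammaDecomp A Γ, ∃ e : A, IsConvexIdempotent A e ∧
      Nonempty ((traceIdeal A D.Q).ringCon.Quotient ≃+* cornerRing A e) :=
  have : IsArtinian Aᵐᵒᵖ A := isArtinian_of_tower K inferInstance
  have : IsArtinianRing A := isArtinian_of_tower K inferInstance
  support_algebra_iso_corner_general A hbasic Γ hΓ
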